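/- arXiv:0812.0997 — 2 statements merged into one kernel-verified Lean document; each statement's English description precedes it below -/
import Mathlib

section
/- Global controllability of the single forced periodic multiparticle system (Theorem on single-force controllability): Assume Φ is admissible and generic. Then for every pair of points x̃, x̂ ∈ ℝ^{2n} there exist a time θ > 0, a measurable essentially bounded control u : [0,θ] → ℝ, and an admissible trajectory x : [0,θ] → ℝ^{2n} of the system ẋ = f(x) + u(t) g with x(0) = x̃ and x(θ) = x̂. -/
/-!
Only the feedback controls `u = c - q₀` (`c` a real constant, index `0` being the forced particle)
and their concatenations are needed. Such a
feedback attaches the forced particle by a linear spring to the point `c`, so the closed-loop field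
`field n Φ c` is again Hamiltonian, with energy `energy n Φ c`. Admissibility makes the energy
sublevel sets bounded (`energy_coercive`): each gap `q_{k-1} - q_k` is bounded above, the gaps sum
to zero around the ring, and the spring pins down the remaining translation. Hence the flows are
complete with bounded orbits (`exists_flow`), they preserve volume (`volume_flow_image`), and they
are reversed by flipping the momenta (`flow_reversal`).

Interior of reachable sets (`interior_reach_nonempty`). Consider compositions of closed-loop flows
as functions of the switching times, and choose one for which the range `V` of the differential has
maximal dimension `r`. The family of all such pairs (endpoint, range) is transported by the
linearized flows and contains the velocities, so differentiating at time `0` shows that the fields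
`field n Φ c` are tangent to it and that bracketing with them preserves tangency
(`IsFlow.lieBracket_mem`). The fields with both properties form a Lie algebra (`Good`). It contains
`∂/∂p₀ = field 1 - field 0`. If it contains `∂/∂p_k`, it contains
`∂/∂q_k = [∂/∂p_k, field]`, and, modulo multiples of `∂/∂p_k`, the bracket `[∂/∂q_k, field]` is
`Φ''(q_{k-1} - q_k) ∂/∂p_{k-1} + Φ''(q_k - q_{k+1}) ∂/∂p_{k+1}`. Iterated brackets with `∂/∂q_k`
yield all Taylor coefficients of the translates of this field along `q_k`. By analyticity the
translates themselves are tangent, and as `Φ''` is neither even nor odd about the midpoint of the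
two gaps, they span both `∂/∂p_{k-1}` and `∂/∂p_{k+1}` (`Generic.separating`, `Good.pair`). Going
around the ring gives all coordinate directions, so `V` is everything, and the inverse function
theorem provides interior points.

Density of reachable sets (`dense_reach`). Let `U` be the interior of the closure of a reachable
set. Volume preservation and bounded energy levels imply that `U` is invariant under both forward
and backward flows, so its frontier is forward invariant. A point of the frontier would have its
reachable set, which has nonempty interior, inside the frontier of an open set, which has none.
Thus `U` is clopen and nonempty, hence everything.

Finally the dense set of points reached from the first endpoint meets the time reversal of the
interior of the set reached from the reversed second endpoint (`joined_all`).
-/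

open scoped BigOperators
open MeasureTheory Filter Set

noncomputable section

/-- The state space ℝ^{2n}, with coordinates (q,p). -/
abbrev State (n : ℕ) := (Fin n → ℝ) × (Fin n → ℝ)

/-- The drift vector field of the periodic multiparticle system,
`f(q,p) = Σ p_k ∂/∂q_k + Σ (φ(q_{k-1}-q_k) - φ(q_k-q_{k+1})) ∂/∂p_k` with `φ = Φ'`,
with cyclic indexing in `Fin n`. -/
def drift (n : ℕ) [NeZero n] (Φ : ℝ → ℝ) (x : State n) : State n :=
  (x.2, fun k => deriv Φ (x.1 (k - 1) - x.1 k) - deriv Φ (x.1 k - x.1 (k + 1)))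

/-- The momentum coordinate vector `e_{p_j} = ∂/∂p_j`. -/
def ep (n : ℕ) [NeZero n] (j : Fin n) : State n := (0, Pi.single j 1)

/-- The position coordinate vector `e_{q_j} = ∂/∂q_j`. -/
def eq' (n : ℕ) [NeZero n] (j : Fin n) : State n := (Pi.single j 1, 0)

/-- `Φ` is admissible: real analytic, bounded below, and `Φ(y) → +∞` as `y → +∞`. -/
def Admissible (Φ : ℝ → ℝ) : Prop :=
  (∀ x, AnalyticAt ℝ Φ x) ∧ BddBelow (Set.range Φ) ∧ Tendsto Φ atTop atTop

/-- `Φ` is generic: for no `b` is `Φ''` even or odd about `b`. -/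
def Generic (Φ : ℝ → ℝ) : Prop :=
  ∀ b : ℝ,
    (¬ ∀ t : ℝ, deriv (deriv Φ) (b + t) = deriv (deriv Φ) (b - t)) ∧
    (¬ ∀ t : ℝ, deriv (deriv Φ) (b + t) = - deriv (deriv Φ) (b - t))

/-- Lie bracket of vector fields: `[X,Y](x) = DY(x)·X(x) − DX(x)·Y(x)`. -/
def lieBracket {n : ℕ} (X Y : State n → State n) : State n → State n :=
  fun x => fderiv ℝ Y x (X x) - fderiv ℝ X x (Y x)

/-- Admissible trajectory of the single forced system `ẋ = f(x) + u(t) g`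
(in absolutely-continuous/integral form). -/
def IsTrajectory (n : ℕ) [NeZero n] (Φ : ℝ → ℝ) (θ : ℝ) (u : ℝ → ℝ)
    (x : ℝ → State n) : Prop :=
  ContinuousOn x (Set.Icc 0 θ) ∧
  ∀ t ∈ Set.Icc 0 θ,
    x t = x 0 + ∫ s in (0:ℝ)..t, (drift n Φ (x s) + u s • ep n 0)

open scoped Topology NNReal ContDiff Manifold

/-! ### Flows and the variational equation -/

section ODE

variable {E : Type*} [NormedAddCommGroup E] [NormedSpace ℝ E] [FiniteDimensional ℝ E]

lemma lipschitz_on_closedBall {F : Type*} [NormedAddCommGroup F] [NormedSpace ℝ F]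
    {v : E → F} (hv : ContDiff ℝ 1 v) (x : E) (R : ℝ) :
    ∃ K : ℝ≥0, LipschitzOnWith K v (Metric.closedBall x R) :=
  hv.contDiffOn.exists_lipschitzOnWith one_ne_zero (convex_closedBall x R)
    (isCompact_closedBall x R)

lemma smulRight_one_eq_toSpanSingleton' (w : E) :
    (1 : ℝ →L[ℝ] ℝ).smulRight w = ContinuousLinearMap.toSpanSingleton ℝ w := by
  ext; simp

/-- A vector field of linear growth has global integral curves: the Picard–Lindelöf theorem gives
local curves on an interval of length independent of the initial point. -/
lemma exists_global_of_linear_growth {v : E → E} (hv : ContDiff ℝ 1 v) {M : ℝ} (hM : 0 < M)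
    (hb : ∀ x, ‖v x‖ ≤ M * (1 + ‖x‖)) (x : E) :
    ∃ γ : ℝ → E, γ 0 = x ∧ ∀ t, HasDerivAt γ (v (γ t)) t := by
  have key := exists_isMIntegralCurve_of_isMIntegralCurveOn (I := 𝓘(ℝ, E)) (M := E) (v := v)
    (contMDiff_vectorSpace_iff_contDiff.2 hv) (ε := 1 / (2 * M)) (by positivity) ?_ x
  · obtain ⟨γ, h0, hγ⟩ := key
    refine ⟨γ, h0, fun t => ?_⟩
    have h1 : HasFDerivAt γ (ContinuousLinearMap.toSpanSingleton ℝ (v (γ t))) t := by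
      rw [← smulRight_one_eq_toSpanSingleton']
      exact hasMFDerivAt_iff_hasFDerivAt.1 (hγ t)
    simpa using h1.hasDerivAt
  · intro y
    obtain ⟨K, hK⟩ := lipschitz_on_closedBall hv y (‖y‖ + 1)
    have hε : (0:ℝ) < 1 / (2 * M) := by positivity
    have hpl : IsPicardLindelof (fun _ ↦ v) (tmin := -(1 / (2 * M))) (tmax := 1 / (2 * M))
        ⟨0, by constructor <;> linarith⟩ y (⟨‖y‖ + 1, by positivity⟩ : ℝ≥0) 0
        (⟨M * (2 * ‖y‖ + 2), by positivity⟩ : ℝ≥0) K := by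
      apply IsPicardLindelof.of_time_independent
      · intro z hz
        have hz' : ‖z‖ ≤ 2 * ‖y‖ + 1 := by
          have h1 : dist z y ≤ ‖y‖ + 1 := hz
          rw [dist_eq_norm] at h1
          have := norm_le_norm_add_norm_sub' z y
          linarith
        refine (hb z).trans ?_
        change M * (1 + ‖z‖) ≤ M * (2 * ‖y‖ + 2)
        exact mul_le_mul_of_nonneg_left (by linarith) hM.le
      · exact hK
      · simp only [sub_zero, zero_sub, neg_neg, max_self, NNReal.coe_zero]
        change M * (2 * ‖y‖ + 2) * (1 / (2 * M)) ≤ ‖y‖ + 1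
        field_simp
        linarith
    obtain ⟨α, h0, hα⟩ := hpl.exists_eq_forall_mem_Icc_hasDerivWithinAt₀
    refine ⟨α, h0, fun t ht => ?_⟩
    have h1 := (hα t (Ioo_subset_Icc_self ht)).mono Ioo_subset_Icc_self
    have h2 := h1.hasFDerivWithinAt
    rw [← smulRight_one_eq_toSpanSingleton'] at h2
    exact hasMFDerivWithinAt_iff_hasFDerivWithinAt.2 h2

/-- `φ` is a complete flow of the vector field `Y`, each bounded set of initial points having
uniformly bounded orbits for all times. -/
structure IsFlow (Y : E → E) (φ : ℝ → E → E) : Prop where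
  smooth : ContDiff ℝ 2 Y
  zero : ∀ z, φ 0 z = z
  deriv : ∀ z t, HasDerivAt (fun t => φ t z) (Y (φ t z)) t
  bdd : ∀ R : ℝ, ∃ R' : ℝ, ∀ z, ‖z‖ ≤ R → ∀ t, ‖φ t z‖ ≤ R'

namespace IsFlow

variable {Y : E → E} {φ : ℝ → E → E}

lemma unique (h : IsFlow Y φ) {γ : ℝ → E} (hγ : ∀ t, HasDerivAt γ (Y (γ t)) t)
    (hb : ∃ R, ∀ t, ‖γ t‖ ≤ R) : ∀ t, γ t = φ t (γ 0) := by
  obtain ⟨R, hR⟩ := hb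
  obtain ⟨R', hR'⟩ := h.bdd ‖γ 0‖
  obtain ⟨K, hK⟩ := lipschitz_on_closedBall (h.smooth.of_le one_le_two) (0 : E) (max R R')
  have := ODE_solution_unique_univ (v := fun _ => Y) (s := fun _ => Metric.closedBall 0 (max R R'))
    (K := K) (f := γ) (g := fun t => φ t (γ 0)) (t₀ := 0) (fun _ => hK)
    (fun t => ⟨hγ t, by simpa using Or.inl (hR t)⟩)
    (fun t => ⟨h.deriv _ t, by simpa using Or.inr (hR' _ le_rfl t)⟩) (by simp [h.zero])
  intro t
  exact congrFun this t

lemma add (h : IsFlow Y φ) (s t : ℝ) (z : E) : φ (s + t) z = φ s (φ t z) := by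
  obtain ⟨R, hR⟩ := h.bdd ‖z‖
  have := h.unique (γ := fun s => φ (s + t) z)
    (fun s => by simpa using (h.deriv z (s + t)).comp_add_const s t)
    ⟨R, fun s => hR z le_rfl _⟩ s
  simpa using this

lemma neg_left (h : IsFlow Y φ) (t : ℝ) (z : E) : φ (-t) (φ t z) = z := by
  rw [← h.add]; simp [h.zero]

lemma neg_right (h : IsFlow Y φ) (t : ℝ) (z : E) : φ t (φ (-t) z) = z := by
  rw [← h.add]; simp [h.zero]

lemma reverse (h : IsFlow Y φ) : IsFlow (fun z => - Y z) (fun t => φ (-t)) where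
  smooth := h.smooth.neg
  zero z := by simp [h.zero]
  deriv z t := by
    have := (h.deriv z (-t)).scomp t (hasDerivAt_neg t)
    simpa [Function.comp_def] using this
  bdd R := by
    obtain ⟨R', hR'⟩ := h.bdd R
    exact ⟨R', fun z hz t => hR' z hz _⟩

/-- Orbits depend on the initial point in a Lipschitz way, by Grönwall's inequality. -/
lemma lipschitz (h : IsFlow Y φ) (R T : ℝ) : ∃ C : ℝ, 0 < C ∧ ∀ z z', ‖z‖ ≤ R → ‖z'‖ ≤ R →
    ∀ t ∈ Icc 0 T, ‖φ t z - φ t z'‖ ≤ C * ‖z - z'‖ := by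
  obtain ⟨R', hR'⟩ := h.bdd R
  obtain ⟨K, hK⟩ := lipschitz_on_closedBall (h.smooth.of_le one_le_two) (0 : E) R'
  refine ⟨Real.exp (K * T), Real.exp_pos _, fun z z' hz hz' t ht => ?_⟩
  have := dist_le_of_trajectories_ODE_of_mem (v := fun _ => Y) (s := fun _ => Metric.closedBall 0 R')
    (K := K) (f := fun t => φ t z) (g := fun t => φ t z') (a := 0) (b := T) (δ := ‖z - z'‖)
    (fun _ _ => hK) (fun t _ => (h.deriv z t).continuousAt.continuousWithinAt)
    (fun t _ => (h.deriv z t).hasDerivWithinAt) (fun t _ => by simpa using hR' z hz t)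
    (fun t _ => (h.deriv z' t).continuousAt.continuousWithinAt)
    (fun t _ => (h.deriv z' t).hasDerivWithinAt) (fun t _ => by simpa using hR' z' hz' t)
    (by simp [h.zero, dist_eq_norm]) t ht
  rw [dist_eq_norm] at this
  refine this.trans ?_
  rw [mul_comm]
  gcongr
  simpa using ht.2

lemma continuous_nonneg (h : IsFlow Y φ) {t : ℝ} (ht : 0 ≤ t) : Continuous (φ t) := by
  rw [continuous_iff_continuousAt]
  intro z
  obtain ⟨C, hC, hC'⟩ := h.lipschitz (‖z‖ + 1) t
  apply ContinuousOn.continuousAt (s := Metric.ball z 1) _ (Metric.ball_mem_nhds _ one_pos)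
  apply LipschitzOnWith.continuousOn (K := ⟨C, hC.le⟩)
  apply LipschitzOnWith.of_dist_le_mul
  have aux : ∀ y ∈ Metric.ball z 1, ‖y‖ ≤ ‖z‖ + 1 := by
    intro y hy
    rw [Metric.mem_ball, dist_eq_norm] at hy
    have := norm_le_norm_add_norm_sub' y z
    linarith
  intro x hx y hy
  rw [dist_eq_norm, dist_eq_norm]
  exact hC' x y (aux x hx) (aux y hy) t ⟨ht, le_rfl⟩

protected lemma continuous (h : IsFlow Y φ) (t : ℝ) : Continuous (φ t) := by
  rcases le_total 0 t with ht | ht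
  · exact h.continuous_nonneg ht
  · simpa using h.reverse.continuous_nonneg (t := -t) (by linarith)

/-- Existence of the solution of the variational equation along the orbit of `z`. -/
lemma exists_variation (h : IsFlow Y φ) (z : E) : ∃ L : ℝ → (E →L[ℝ] E),
    L 0 = ContinuousLinearMap.id ℝ E ∧
    ∀ t, HasDerivAt L ((fderiv ℝ Y (φ t z)).comp (L t)) t := by
  obtain ⟨R, hR⟩ := h.bdd ‖z‖
  have hY' : ContDiff ℝ 1 (fderiv ℝ Y) := h.smooth.fderiv_right (by norm_num)
  have hYc : ContDiff ℝ 1 Y := h.smooth.of_le one_le_two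
  obtain ⟨K, hK⟩ := (isCompact_closedBall (0 : E) R).exists_bound_of_continuousOn
    (f := fderiv ℝ Y) hY'.continuous.continuousOn
  have hcurve : ContDiff ℝ 1 (fun t => φ t z) := by
    rw [contDiff_one_iff_deriv]
    refine ⟨fun t => (h.deriv z t).differentiableAt, ?_⟩
    have : _root_.deriv (fun t => φ t z) = fun t => Y (φ t z) :=
      funext fun t => (h.deriv z t).deriv
    rw [this]
    exact hYc.continuous.comp
      (continuous_iff_continuousAt.2 fun t => (h.deriv z t).continuousAt)
  have hA : ContDiff ℝ 1 (fun t => fderiv ℝ Y (φ t z)) := hY'.comp hcurve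
  have hAb : ∀ t, ‖fderiv ℝ Y (φ t z)‖ ≤ K := fun t => hK _ (by simpa using hR z le_rfl t)
  have hK0 : 0 ≤ K := (norm_nonneg _).trans (hAb 0)
  -- the variational equation made autonomous by adjoining the time as a variable
  obtain ⟨γ, h0, hγ⟩ := exists_global_of_linear_growth (E := ℝ × (E →L[ℝ] E))
    (v := fun w => (1, (fderiv ℝ Y (φ w.1 z)).comp w.2)) (M := K + 1)
    (by
      apply contDiff_const.prodMk
      exact (hA.comp contDiff_fst).clm_comp contDiff_snd) (by linarith)
    (by
      rintro ⟨t, A⟩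
      rw [Prod.norm_def]
      have h1 : ‖A‖ ≤ ‖((t, A) : ℝ × (E →L[ℝ] E))‖ := norm_snd_le (t, A)
      apply max_le
      · simp only [norm_one]
        nlinarith [norm_nonneg ((t, A) : ℝ × (E →L[ℝ] E))]
      · calc _ ≤ ‖fderiv ℝ Y (φ t z)‖ * ‖A‖ := ContinuousLinearMap.opNorm_comp_le _ _
          _ ≤ K * ‖((t, A) : ℝ × (E →L[ℝ] E))‖ := by gcongr; exact hAb t
          _ ≤ _ := by nlinarith [norm_nonneg ((t, A) : ℝ × (E →L[ℝ] E))])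
    (0, ContinuousLinearMap.id ℝ E)
  have hτ : ∀ t, (γ t).1 = t := by
    have h1 : ∀ t, HasDerivAt (fun t => (γ t).1 - t) 0 t := fun t => by
      have h2 := ((ContinuousLinearMap.fst ℝ ℝ (E →L[ℝ] E)).hasFDerivAt.comp_hasDerivAt t
        (hγ t)).fun_sub (hasDerivAt_id' t)
      simpa using h2
    intro t
    have := is_const_of_deriv_eq_zero (fun t => (h1 t).differentiableAt)
      (fun t => (h1 t).deriv) t 0
    simp only [h0] at this
    linarith
  refine ⟨fun t => (γ t).2, by simp [h0], fun t => ?_⟩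
  have := (ContinuousLinearMap.snd ℝ ℝ (E →L[ℝ] E)).hasFDerivAt.comp_hasDerivAt t (hγ t)
  simp only [ContinuousLinearMap.coe_snd', hτ t] at this
  exact this

/-- The solution of the variational equation along the orbit of `z`. -/
def variation (h : IsFlow Y φ) (z : E) : ℝ → (E →L[ℝ] E) := (h.exists_variation z).choose

lemma variation_zero (h : IsFlow Y φ) (z : E) :
    h.variation z 0 = ContinuousLinearMap.id ℝ E := (h.exists_variation z).choose_spec.1

lemma variation_deriv (h : IsFlow Y φ) (z : E) (t : ℝ) :
    HasDerivAt (h.variation z) ((fderiv ℝ Y (φ t z)).comp (h.variation z t)) t :=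
  (h.exists_variation z).choose_spec.2 t

/-- The variational operator approximates differences of orbits, uniformly on compact time
intervals. -/
lemma uniform_strict (h : IsFlow Y φ) (z₀ : E) (T : ℝ) {ε : ℝ} (hε : 0 < ε) :
    ∃ δ > 0, ∀ z ∈ Metric.ball z₀ δ, ∀ z' ∈ Metric.ball z₀ δ, ∀ t ∈ Icc 0 T,
      ‖φ t z - φ t z' - h.variation z₀ t (z - z')‖ ≤ ε * ‖z - z'‖ := by
  obtain ⟨R, hR⟩ := h.bdd (‖z₀‖ + 1)
  have hY' : ContDiff ℝ 1 (fderiv ℝ Y) := h.smooth.fderiv_right (by norm_num)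
  have hYc : ContDiff ℝ 1 Y := h.smooth.of_le one_le_two
  obtain ⟨K₀, hK₀⟩ := (isCompact_closedBall (0 : E) R).exists_bound_of_continuousOn
    (f := fderiv ℝ Y) hY'.continuous.continuousOn
  obtain ⟨C, hC, hC'⟩ := h.lipschitz (‖z₀‖ + 1) T
  set K := max K₀ 1 with hKdef
  have hK1 : 1 ≤ K := le_max_right _ _
  set η := ε / (C * Real.exp (K * T)) with hη
  have hη0 : 0 < η := by positivity
  -- uniform continuity of the derivative on the compact ball containing all orbits
  have huc := (isCompact_closedBall (0 : E) R).uniformContinuousOn_of_continuous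
    (f := fderiv ℝ Y) hY'.continuous.continuousOn
  rw [Metric.uniformContinuousOn_iff] at huc
  obtain ⟨δ', hδ', hu⟩ := huc η hη0
  have aux : ∀ y ∈ Metric.ball z₀ 1, ‖y‖ ≤ ‖z₀‖ + 1 := by
    intro y hy
    rw [Metric.mem_ball, dist_eq_norm] at hy
    have := norm_le_norm_add_norm_sub' y z₀
    linarith
  refine ⟨min 1 (δ' / C), by positivity, fun z hz z' hz' => ?_⟩
  have hz1 := aux z (Metric.ball_subset_ball (min_le_left _ _) hz)
  have hz1' := aux z' (Metric.ball_subset_ball (min_le_left _ _) hz')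
  have hnear : ∀ y ∈ Metric.ball z₀ (min 1 (δ' / C)), ∀ t ∈ Icc 0 T,
      φ t y ∈ Metric.ball (φ t z₀) δ' ∩ Metric.closedBall 0 R := by
    intro y hy t ht
    have hy1 := aux y (Metric.ball_subset_ball (min_le_left _ _) hy)
    refine ⟨?_, by simpa using hR y hy1 t⟩
    have h2 : dist y z₀ < δ' / C := lt_of_lt_of_le hy (min_le_right _ _)
    rw [Metric.mem_ball, dist_eq_norm]
    rw [dist_eq_norm, lt_div_iff₀ hC] at h2
    have := hC' y z₀ hy1 (by linarith) t ht
    linarith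
  have hmain := norm_le_gronwallBound_of_norm_deriv_right_le
    (f := fun t => φ t z - φ t z' - h.variation z₀ t (z - z'))
    (f' := fun t => Y (φ t z) - Y (φ t z') -
      (fderiv ℝ Y (φ t z₀)) (h.variation z₀ t (z - z')))
    (δ := 0) (K := K) (ε := η * (C * ‖z - z'‖)) (a := 0) (b := T)
    (fun t _ => (((h.deriv z t).sub (h.deriv z' t)).sub
      ((h.variation_deriv z₀ t).clm_apply (hasDerivAt_const t (z - z')))).continuousAt.continuousWithinAt)
    (fun t _ => by
      have := (((h.deriv z t).fun_sub (h.deriv z' t)).fun_sub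
        ((h.variation_deriv z₀ t).clm_apply (hasDerivAt_const t (z - z')))).hasDerivWithinAt
        (s := Ici t)
      simpa using this)
    (by simp [h.zero, h.variation_zero])
    (by
      intro t ht
      have ht' : t ∈ Icc 0 T := Ico_subset_Icc_self ht
      have h1 : ‖Y (φ t z) - Y (φ t z') - (fderiv ℝ Y (φ t z₀)) (φ t z - φ t z')‖
          ≤ η * ‖φ t z - φ t z'‖ := by
        apply Convex.norm_image_sub_le_of_norm_fderiv_le' (𝕜 := ℝ)
          (s := Metric.ball (φ t z₀) δ' ∩ Metric.closedBall 0 R)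
        · intro x _
          exact (hYc.differentiable one_ne_zero) x
        · intro x hx
          rw [← dist_eq_norm]
          exact (hu x hx.2 (φ t z₀) (by simpa using hR z₀ (by linarith) t) hx.1).le
        · exact (convex_ball _ _).inter (convex_closedBall _ _)
        · exact hnear z' hz' t ht'
        · exact hnear z hz t ht'
      have h2 : ‖(fderiv ℝ Y (φ t z₀)) (φ t z - φ t z' - h.variation z₀ t (z - z'))‖
          ≤ K * ‖φ t z - φ t z' - h.variation z₀ t (z - z')‖ := by
        refine (ContinuousLinearMap.le_opNorm _ _).trans ?_
        gcongr
        exact (hK₀ _ (by simpa using hR z₀ (by linarith) t)).trans (le_max_left _ _)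
      have h3 := hC' z z' hz1 hz1' t ht'
      have h4 : Y (φ t z) - Y (φ t z') - (fderiv ℝ Y (φ t z₀)) (h.variation z₀ t (z - z'))
          = (fderiv ℝ Y (φ t z₀)) (φ t z - φ t z' - h.variation z₀ t (z - z')) +
            (Y (φ t z) - Y (φ t z') - (fderiv ℝ Y (φ t z₀)) (φ t z - φ t z')) := by
        rw [map_sub (fderiv ℝ Y (φ t z₀)) (φ t z - φ t z')]
        abel
      rw [h4]
      refine (norm_add_le _ _).trans (add_le_add h2 (h1.trans ?_))
      gcongr)
  intro t ht
  refine (hmain t ht).trans ?_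
  rw [gronwallBound_of_K_ne_0 (by positivity), sub_zero]
  have hexp : Real.exp (K * t) - 1 ≤ Real.exp (K * T) := by
    have : Real.exp (K * t) ≤ Real.exp (K * T) := by gcongr; exact ht.2
    linarith
  have hexp0 : 0 ≤ Real.exp (K * t) - 1 := by
    have : 0 ≤ K * t := mul_nonneg (by positivity) ht.1
    linarith [Real.add_one_le_exp (K * t)]
  have : η * (C * ‖z - z'‖) / K ≤ η * (C * ‖z - z'‖) := div_le_self (by positivity) hK1
  simp only [zero_mul, zero_add]
  calc _ ≤ η * (C * ‖z - z'‖) * Real.exp (K * T) := by gcongr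
    _ = ε * ‖z - z'‖ := by rw [hη]; field_simp

lemma curve_lipschitz (h : IsFlow Y φ) (R : ℝ) : ∃ C : ℝ, 0 < C ∧ ∀ z, ‖z‖ ≤ R →
    ∀ s t, ‖φ s z - φ t z‖ ≤ C * |s - t| := by
  obtain ⟨R', hR'⟩ := h.bdd R
  obtain ⟨B, hB⟩ := (isCompact_closedBall (0 : E) R').exists_bound_of_continuousOn
    (f := Y) h.smooth.continuous.continuousOn
  refine ⟨max B 1, by positivity, fun z hz s t => ?_⟩
  have := Convex.norm_image_sub_le_of_norm_hasDerivWithin_le (f := fun t => φ t z) (s := univ)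
    (f' := fun t => Y (φ t z)) (C := max B 1) (x := t) (y := s)
    (fun t _ => (h.deriv z t).hasDerivWithinAt)
    (fun t _ => (hB _ (by simpa using hR' z hz t)).trans (le_max_left _ _)) convex_univ
    (mem_univ _) (mem_univ _)
  simpa using this

/-- At positive times the flow is strictly differentiable jointly in time and initial point. -/
lemma hasStrictFDerivAt (h : IsFlow Y φ) {t₀ : ℝ} (ht₀ : 0 < t₀) (z₀ : E) :
    HasStrictFDerivAt (fun w : E × ℝ => φ w.2 w.1)
      ((h.variation z₀ t₀).coprod (ContinuousLinearMap.toSpanSingleton ℝ (Y (φ t₀ z₀))))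
      (z₀, t₀) := by
  refine HasStrictFDerivAt.of_isLittleO (Asymptotics.IsLittleO.of_bound fun c hc => ?_)
  obtain ⟨δ, hδ, hstrict⟩ := h.uniform_strict z₀ (t₀ + 1) (ε := c / 3) (by positivity)
  obtain ⟨C₁, hC₁, hC₁'⟩ := h.lipschitz (‖z₀‖ + 1) (t₀ + 1)
  obtain ⟨C₂, hC₂, hC₂'⟩ := h.curve_lipschitz (‖z₀‖ + 1)
  -- neighbourhood on which the velocity is close to its value at the base point
  obtain ⟨δ₂, hδ₂, hv⟩ := Metric.continuousAt_iff.1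
    (h.smooth.continuous.continuousAt (x := φ t₀ z₀)) (c / 3) (by positivity)
  obtain ⟨δ₃, hδ₃, hL⟩ := Metric.continuousAt_iff.1
    ((h.variation_deriv z₀ t₀).continuousAt) (c / 3) (by positivity)
  set r := min (min δ 1) (min (min t₀ δ₃) (δ₂ / (C₁ + C₂))) with hr
  have hr0 : 0 < r := by positivity
  have hnhds : Metric.ball z₀ r ×ˢ Metric.ball t₀ r ∈ 𝓝 (z₀, t₀) :=
    prod_mem_nhds (Metric.ball_mem_nhds _ hr0) (Metric.ball_mem_nhds _ hr0)
  have hrδ : r ≤ δ := (min_le_left _ _).trans (min_le_left _ _)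
  have hr1 : r ≤ 1 := (min_le_left _ _).trans (min_le_right _ _)
  have hrt : r ≤ t₀ := (min_le_right _ _).trans ((min_le_left _ _).trans (min_le_left _ _))
  have hr3 : r ≤ δ₃ := (min_le_right _ _).trans ((min_le_left _ _).trans (min_le_right _ _))
  have hr2 : r ≤ δ₂ / (C₁ + C₂) := (min_le_right _ _).trans (min_le_right _ _)
  have hr2' : r * (C₁ + C₂) ≤ δ₂ := by rwa [le_div_iff₀ (by positivity)] at hr2
  have aux : ∀ y ∈ Metric.ball z₀ r, ‖y‖ ≤ ‖z₀‖ + 1 := by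
    intro y hy
    rw [Metric.mem_ball, dist_eq_norm] at hy
    have := norm_le_norm_add_norm_sub' y z₀
    linarith
  have auxt : ∀ t ∈ Metric.ball t₀ r, t ∈ Icc 0 (t₀ + 1) := by
    intro t ht
    rw [Metric.mem_ball, Real.dist_eq, abs_lt] at ht
    constructor <;> linarith
  filter_upwards [prod_mem_nhds hnhds hnhds]
  rintro ⟨⟨z, t⟩, ⟨z', t'⟩⟩ ⟨⟨hz, ht⟩, ⟨hz', ht'⟩⟩
  simp only at hz ht hz' ht'
  have e1 := hstrict z (Metric.ball_subset_ball hrδ hz) z' (Metric.ball_subset_ball hrδ hz') t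
    (auxt t ht)
  have e2 : ‖(h.variation z₀ t - h.variation z₀ t₀) (z - z')‖ ≤ c / 3 * ‖z - z'‖ := by
    refine (ContinuousLinearMap.le_opNorm _ _).trans ?_
    gcongr
    rw [← dist_eq_norm]
    exact (hL (lt_of_lt_of_le ht hr3)).le
  have e3 : ‖φ t z' - φ t' z' - (t - t') • Y (φ t₀ z₀)‖ ≤ c / 3 * ‖t - t'‖ := by
    have := Convex.norm_image_sub_le_of_norm_hasDerivWithin_le
      (f := fun t => φ t z' - t • Y (φ t₀ z₀)) (s := Metric.ball t₀ r)
      (f' := fun t => Y (φ t z') - Y (φ t₀ z₀)) (C := c / 3) (x := t') (y := t)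
      (fun t _ => by
        simpa using ((h.deriv z' t).fun_sub
          ((hasDerivAt_id' t).smul_const (Y (φ t₀ z₀)))).hasDerivWithinAt)
      (fun s hs => by
        rw [← dist_eq_norm]
        refine (hv ?_).le
        rw [dist_eq_norm]
        have a1 := hC₁' z' z₀ (aux z' hz') (by linarith) s (auxt s hs)
        have a2 := hC₂' z₀ (by linarith) s t₀
        have a3 : ‖φ s z' - φ t₀ z₀‖ ≤ ‖φ s z' - φ s z₀‖ + ‖φ s z₀ - φ t₀ z₀‖ :=
          norm_sub_le_norm_sub_add_norm_sub _ _ _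
        have a4 : ‖z' - z₀‖ < r := by rw [← dist_eq_norm]; exact hz'
        have a5 : |s - t₀| < r := by rw [← Real.dist_eq]; exact hs
        nlinarith)
      (convex_ball _ _) ht' ht
    have e : φ t z' - φ t' z' - (t - t') • Y (φ t₀ z₀) =
        φ t z' - t • Y (φ t₀ z₀) - (φ t' z' - t' • Y (φ t₀ z₀)) := by
      rw [sub_smul]; abel
    rw [e]
    exact this
  have hsplit : φ t z - φ t' z' - ((h.variation z₀ t₀).coprod
      (ContinuousLinearMap.toSpanSingleton ℝ (Y (φ t₀ z₀)))) ((z, t) - (z', t')) =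
      (φ t z - φ t z' - h.variation z₀ t (z - z')) +
      (h.variation z₀ t - h.variation z₀ t₀) (z - z') +
      (φ t z' - φ t' z' - (t - t') • Y (φ t₀ z₀)) := by
    simp only [Prod.mk_sub_mk, ContinuousLinearMap.coprod_apply,
      ContinuousLinearMap.toSpanSingleton_apply, ContinuousLinearMap.sub_apply]
    abel
  simp only
  rw [hsplit]
  have n1 : ‖z - z'‖ ≤ ‖((z, t) - (z', t') : E × ℝ)‖ := norm_fst_le ((z, t) - (z', t') : E × ℝ)
  have n2 : ‖t - t'‖ ≤ ‖((z, t) - (z', t') : E × ℝ)‖ := norm_snd_le ((z, t) - (z', t') : E × ℝ)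
  refine (norm_add₃_le).trans ?_
  nlinarith

/-- Each time-`t` map, `t > 0`, has the variational operator as its derivative. -/
lemma hasFDerivAt (h : IsFlow Y φ) {t : ℝ} (ht : 0 < t) (z : E) :
    HasFDerivAt (φ t) (h.variation z t) z := by
  have h1 := (h.hasStrictFDerivAt ht z).hasFDerivAt
  have h2 : HasFDerivAt (fun z : E => (z, t)) (ContinuousLinearMap.inl ℝ E ℝ) z :=
    hasFDerivAt_prodMk_left z t
  have h3 := h1.comp z h2
  simpa [Function.comp_def] using h3

end IsFlow

end ODE

/-! ### The closed-loop Hamiltonian systems -/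

section Hamiltonian

variable {n : ℕ} [NeZero n] {Φ : ℝ → ℝ}

/-- The closed-loop field obtained from the feedback control `u = c - q₀`: the first particle is
additionally attached by a spring to the point `c`. -/
def field (n : ℕ) [NeZero n] (Φ : ℝ → ℝ) (c : ℝ) (z : State n) : State n :=
  drift n Φ z + (c - z.1 0) • ep n 0

/-- The total energy of the closed-loop system with spring attached at `c`. -/
def energy (n : ℕ) [NeZero n] (Φ : ℝ → ℝ) (c : ℝ) (z : State n) : ℝ :=
  ∑ k, (z.2 k) ^ 2 / 2 + ∑ k, Φ (z.1 (k - 1) - z.1 k) + (z.1 0 - c) ^ 2 / 2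

lemma Admissible.contDiff (h : Admissible Φ) : ContDiff ℝ ω Φ :=
  contDiff_omega_iff_analyticOnNhd.2 fun x _ => h.1 x

lemma Admissible.contDiff_deriv (h : Admissible Φ) : ContDiff ℝ ω (deriv Φ) :=
  contDiff_omega_iff_analyticOnNhd.2 fun x _ => (h.1 x).deriv

lemma Admissible.contDiff_deriv2 (h : Admissible Φ) : ContDiff ℝ ω (deriv (deriv Φ)) :=
  contDiff_omega_iff_analyticOnNhd.2 fun x _ => (h.1 x).deriv.deriv

lemma contDiff_field (h : Admissible Φ) (c : ℝ) : ContDiff ℝ ω (field n Φ c) := by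
  have h1 := h.contDiff_deriv
  unfold field drift
  fun_prop

lemma field_fst (c : ℝ) (z : State n) : (field n Φ c z).1 = z.2 := by
  simp [field, drift, ep]

lemma field_snd (c : ℝ) (z : State n) (k : Fin n) : (field n Φ c z).2 k =
    deriv Φ (z.1 (k - 1) - z.1 k) - deriv Φ (z.1 k - z.1 (k + 1)) +
      (c - z.1 0) * (if k = 0 then 1 else 0) := by
  simp [field, drift, ep, Pi.single_apply]

lemma continuous_energy (h : Admissible Φ) (c : ℝ) : Continuous (energy n Φ c) := by
  have h1 := h.contDiff.continuous
  unfold energy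
  fun_prop

/-- Cyclic summation by parts. -/
lemma sum_cyclic (a b : Fin n → ℝ) :
    ∑ k, b k * (a (k - 1) - a k) = - ∑ k, a k * (b k - b (k + 1)) := by
  have h1 : ∑ k, b k * a (k - 1) = ∑ k, b (k + 1) * a k := by
    rw [← Equiv.sum_comp (Equiv.addRight (1 : Fin n)) (fun k => b k * a (k - 1))]
    simp
  simp only [mul_sub, Finset.sum_sub_distrib, h1]
  rw [neg_sub]
  congr 1 <;> exact Finset.sum_congr rfl fun _ _ => mul_comm _ _

/-- Energy is constant along any time-rescaled trajectory of the closed-loop field. -/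
lemma energy_const (h : Admissible Φ) (c : ℝ) {γ : ℝ → State n} {χ : ℝ → ℝ}
    (hγ : ∀ t, HasDerivAt γ (χ t • field n Φ c (γ t)) t) (t : ℝ) :
    energy n Φ c (γ t) = energy n Φ c (γ 0) := by
  have hd : ∀ t, HasDerivAt (fun t => energy n Φ c (γ t)) 0 t := by
    intro t
    have hq : ∀ k, HasDerivAt (fun t => (γ t).1 k) (χ t * (γ t).2 k) t := fun k => by
      have h1 := (ContinuousLinearMap.fst ℝ (Fin n → ℝ) (Fin n → ℝ)).hasFDerivAt.comp_hasDerivAt t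
        (hγ t)
      have h2 := hasDerivAt_pi.1 h1 k
      simpa [field_fst] using h2
    have hp : ∀ k, HasDerivAt (fun t => (γ t).2 k) (χ t * (field n Φ c (γ t)).2 k) t := fun k => by
      have h1 := (ContinuousLinearMap.snd ℝ (Fin n → ℝ) (Fin n → ℝ)).hasFDerivAt.comp_hasDerivAt t
        (hγ t)
      have h2 := hasDerivAt_pi.1 h1 k
      simpa using h2
    have hΦ : ∀ y, HasDerivAt Φ (deriv Φ y) y := fun y => (h.1 y).differentiableAt.hasDerivAt
    have h1 := (HasDerivAt.fun_sum (u := Finset.univ)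
      (fun k _ => ((hp k).fun_pow 2).div_const 2)).fun_add
      (HasDerivAt.fun_sum (u := Finset.univ) (fun k _ =>
        (hΦ ((γ t).1 (k - 1) - (γ t).1 k)).comp t ((hq (k - 1)).fun_sub (hq k))))
    have h2 := h1.fun_add ((((hq 0).sub_const c).fun_pow 2).div_const 2)
    refine HasDerivAt.congr_deriv h2 ?_
    have key := sum_cyclic (fun k => (γ t).2 k)
      (fun k => deriv Φ ((γ t).1 (k - 1) - (γ t).1 k))
    simp only [add_sub_cancel_right] at key
    have s1 : ∑ k, ((2 : ℕ) : ℝ) * (γ t).2 k ^ (2 - 1) * (χ t * (deriv Φ ((γ t).1 (k - 1) - (γ t).1 k) -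
        deriv Φ ((γ t).1 k - (γ t).1 (k + 1)) + (c - (γ t).1 0) * (if k = 0 then 1 else 0))) / 2
        = χ t * (∑ k, (γ t).2 k * (deriv Φ ((γ t).1 (k - 1) - (γ t).1 k) -
        deriv Φ ((γ t).1 k - (γ t).1 (k + 1)))) + χ t * (γ t).2 0 * (c - (γ t).1 0) := by
      have : χ t * (γ t).2 0 * (c - (γ t).1 0) =
          ∑ k, (if k = 0 then χ t * (γ t).2 k * (c - (γ t).1 0) else 0) := by simp
      rw [this, Finset.mul_sum, ← Finset.sum_add_distrib]
      refine Finset.sum_congr rfl fun k _ => ?_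
      split_ifs <;> (push_cast; ring)
    have s2 : ∑ k, deriv Φ ((γ t).1 (k - 1) - (γ t).1 k) * (χ t * (γ t).2 (k - 1) - χ t * (γ t).2 k)
        = χ t * ∑ k, deriv Φ ((γ t).1 (k - 1) - (γ t).1 k) * ((γ t).2 (k - 1) - (γ t).2 k) := by
      rw [Finset.mul_sum]
      exact Finset.sum_congr rfl fun k _ => by ring
    simp only [field_snd]
    rw [s1, s2, key]
    push_cast
    ring
  exact is_const_of_deriv_eq_zero (fun t => (hd t).differentiableAt) (fun t => (hd t).deriv) t 0

open scoped Fin.CommRing in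
/-- Energy sublevels are bounded: the energy bounds all gaps from above, and going once around the
ring bounds them from below. -/
lemma energy_coercive (h : Admissible Φ) (c e : ℝ) :
    ∃ R : ℝ, ∀ z, energy n Φ c z ≤ e → ‖z‖ ≤ R := by
  obtain ⟨-, ⟨m, hm⟩, htop⟩ := h
  set B := |m| with hB
  have hB' : ∀ y, -B ≤ Φ y := fun y => by
    have := hm (mem_range_self y)
    have := neg_abs_le m
    linarith
  have hB0 : 0 ≤ B := abs_nonneg m
  set N := e + n * B with hN
  obtain ⟨M₀, hM₀⟩ := (tendsto_atTop_atTop.1 htop) (N + 1)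
  set M := max M₀ 0 with hM
  have hM0 : 0 ≤ M := le_max_right _ _
  refine ⟨|c| + (2 * |N| + 1) + n * M, fun z hz => ?_⟩
  have hΦs : -(n * B) ≤ ∑ k, Φ (z.1 (k - 1) - z.1 k) := by
    have := Finset.card_nsmul_le_sum Finset.univ (fun k => Φ (z.1 (k - 1) - z.1 k)) (-B)
      (fun k _ => hB' _)
    simp at this
    linarith
  have hps : 0 ≤ ∑ k, (z.2 k) ^ 2 / 2 := Finset.sum_nonneg fun k _ => by positivity
  have hq0 : 0 ≤ (z.1 0 - c) ^ 2 / 2 := by positivity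
  unfold energy at hz
  have hp : ∀ k, (z.2 k) ^ 2 / 2 ≤ N := fun k => by
    have := Finset.single_le_sum (f := fun k => (z.2 k) ^ 2 / 2) (fun k _ => by positivity)
      (Finset.mem_univ k)
    linarith
  have hq : (z.1 0 - c) ^ 2 / 2 ≤ N := by linarith
  have hgapΦ : ∀ k, Φ (z.1 (k - 1) - z.1 k) ≤ N := fun k => by
    have h1 := Finset.single_le_sum (f := fun k => Φ (z.1 (k - 1) - z.1 k) + B)
      (fun k _ => by linarith [hB' (z.1 (k - 1) - z.1 k)]) (Finset.mem_univ k)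
    rw [Finset.sum_add_distrib] at h1
    simp at h1
    linarith
  have hgap : ∀ k, z.1 (k - 1) - z.1 k ≤ M := fun k => by
    by_contra hcon
    push Not at hcon
    have := hM₀ _ ((le_max_left M₀ 0).trans hcon.le)
    linarith [hgapΦ k]
  -- the upper bound on the gaps, summed along an arc of the ring starting at `k`
  have hchain : ∀ (k : Fin n) (j : ℕ), z.1 k ≤ z.1 (k + (j : Fin n)) + j * M := by
    intro k j
    induction j with
    | zero => simp
    | succ j ih =>
      have h1 := hgap (k + ((j + 1 : ℕ) : Fin n))
      have h2 : k + ((j + 1 : ℕ) : Fin n) - 1 = k + (j : Fin n) := by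
        push_cast
        ring
      rw [h2] at h1
      push_cast at h1 ⊢
      linarith
  have sqb : ∀ x : ℝ, x ^ 2 / 2 ≤ N → |x| ≤ 2 * |N| + 1 := fun x hx => by
    have : N ≤ |N| := le_abs_self N
    nlinarith [sq_abs x, abs_nonneg x, abs_nonneg N]
  have h0 := sqb _ hq
  have hcabs : |z.1 0| ≤ |c| + (2 * |N| + 1) := by
    have := abs_add_le c (z.1 0 - c)
    rw [add_sub_cancel] at this
    linarith
  have hnM : 0 ≤ n * M := by positivity
  -- upper and lower bounds on `q_k` come from the two arcs between `k` and the origin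
  have hqk : ∀ k, |z.1 k| ≤ |c| + (2 * |N| + 1) + n * M := fun k => by
    have u1 := hchain 0 k.val
    have u2 := hchain k (n - k.val)
    have e1 : (0 : Fin n) + ((k.val : ℕ) : Fin n) = k := by simp
    have e2 : k + ((n - k.val : ℕ) : Fin n) = 0 := by simp
    rw [e1] at u1
    rw [e2] at u2
    have c1 : (k.val : ℝ) * M ≤ n * M := by
      gcongr; exact k.isLt.le
    have c2 : ((n - k.val : ℕ) : ℝ) * M ≤ n * M := by
      gcongr; exact Nat.sub_le _ _
    have a1 := neg_abs_le (z.1 0)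
    have a2 := le_abs_self (z.1 0)
    rw [abs_le]
    constructor <;> linarith
  have hN0 : 0 ≤ 2 * |N| + 1 := by positivity
  have hc0 := abs_nonneg c
  rw [Prod.norm_def]
  apply max_le
  · rw [pi_norm_le_iff_of_nonneg (by linarith)]
    exact fun k => hqk k
  · rw [pi_norm_le_iff_of_nonneg (by linarith)]
    exact fun k => (sqb _ (hp k)).trans (by linarith)

/-- The closed-loop field is complete: a cutoff of the field outside a large ball has global integral
curves, and conservation of energy keeps them in the ball where the cutoff is invisible. -/
lemma exists_flow (h : Admissible Φ) (c : ℝ) : ∃ φ, IsFlow (field n Φ c) φ := by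
  have hsm : ContDiff ℝ 2 (field n Φ c) := (contDiff_field h c).of_le (by exact le_top)
  have key : ∀ z : State n, ∃ γ : ℝ → State n, γ 0 = z ∧
      ∀ t, HasDerivAt γ (field n Φ c (γ t)) t := by
    intro z
    obtain ⟨R, hR⟩ := energy_coercive (n := n) h c (energy n Φ c z)
    have hR0 : 0 ≤ R := (norm_nonneg z).trans (hR z le_rfl)
    let χ : ContDiffBump (0 : State n) := ⟨R + 1, R + 2, by linarith, by linarith⟩
    obtain ⟨B, hB⟩ := (isCompact_closedBall (0 : State n) (R + 2)).exists_bound_of_continuousOn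
      (f := field n Φ c) hsm.continuous.continuousOn
    have hB0 : 0 ≤ B := (norm_nonneg _).trans (hB 0 (by simp; linarith))
    obtain ⟨γ, h0, hγ⟩ := exists_global_of_linear_growth (v := fun z => χ z • field n Φ c z)
      (χ.contDiff.smul (hsm.of_le one_le_two)) (M := B + 1) (by linarith) (by
        intro x
        by_cases hx : x ∈ Metric.closedBall (0 : State n) (R + 2)
        · have h1 := hB x hx
          rw [norm_smul, Real.norm_of_nonneg χ.nonneg]
          have h2 := χ.le_one (x := x)
          have h3 := χ.nonneg (x := x)
          have h4 := norm_nonneg x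
          have h5 := norm_nonneg (field n Φ c x)
          nlinarith [mul_nonneg h3 h5]
        · have : χ x = 0 := by
            apply χ.zero_of_le_dist
            simp only [Metric.mem_closedBall, not_le] at hx
            exact hx.le
          rw [this, zero_smul, norm_zero]
          positivity) z
    refine ⟨γ, h0, fun t => ?_⟩
    have hE := energy_const h c (χ := fun t => χ (γ t)) hγ t
    rw [h0] at hE
    have h1 : χ (γ t) = 1 := by
      apply χ.one_of_mem_closedBall
      have := hR _ hE.le
      simp only [Metric.mem_closedBall, dist_zero_right]
      change ‖γ t‖ ≤ R + 1
      linarith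
    simpa [h1] using hγ t
  choose γ h0 hγ using key
  refine ⟨fun t z => γ z t, hsm, h0, hγ, fun r => ?_⟩
  obtain ⟨e, he⟩ := (isCompact_closedBall (0 : State n) r).exists_bound_of_continuousOn
    (f := energy n Φ c) (continuous_energy h c).continuousOn
  obtain ⟨R, hR⟩ := energy_coercive (n := n) h c e
  refine ⟨R, fun z hz t => hR _ ?_⟩
  have := energy_const h c (χ := fun _ => 1) (γ := γ z) (fun t => by simpa using hγ z t) t
  rw [this, h0]
  exact (le_abs_self _).trans (he z (by simpa using hz))

/-- The flow of the closed-loop field. -/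
def flow (n : ℕ) [NeZero n] (h : Admissible Φ) (c : ℝ) : ℝ → State n → State n :=
  (exists_flow (n := n) h c).choose

lemma isFlow (h : Admissible Φ) (c : ℝ) : IsFlow (field n Φ c) (flow n h c) :=
  (exists_flow h c).choose_spec

lemma energy_flow (h : Admissible Φ) (c t : ℝ) (z : State n) :
    energy n Φ c (flow n h c t z) = energy n Φ c z := by
  have := energy_const h c (χ := fun _ => 1) (γ := fun t => flow n h c t z)
    (fun t => by simpa using (isFlow h c).deriv z t) t
  simpa [(isFlow h c).zero] using this

end Hamiltonian

/-! ### Symplecticity, volume preservation and time reversal -/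

section Symplectic

variable {n : ℕ} [NeZero n] {Φ : ℝ → ℝ}

lemma fderiv_field (h : Admissible Φ) (c : ℝ) (z w : State n) :
    fderiv ℝ (field n Φ c) z w = (w.2, fun k =>
      deriv (deriv Φ) (z.1 (k - 1) - z.1 k) * (w.1 (k - 1) - w.1 k) -
      deriv (deriv Φ) (z.1 k - z.1 (k + 1)) * (w.1 k - w.1 (k + 1)) -
      w.1 0 * (if k = 0 then 1 else 0)) := by
  have hd : HasFDerivAt (field n Φ c) (fderiv ℝ (field n Φ c) z) z :=
    (((contDiff_field h c).differentiable (by simp)) z).hasFDerivAt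
  -- differentiate along the line through `z` in the direction `w`
  have hline : HasDerivAt (fun t : ℝ => z + t • w) w 0 := by
    simpa using ((hasDerivAt_id' (0 : ℝ)).smul_const w).const_add z
  have hz0 : z + (0 : ℝ) • w = z := by simp
  have h1 : HasDerivAt (fun t : ℝ => field n Φ c (z + t • w)) (fderiv ℝ (field n Φ c) z w) 0 :=
    HasFDerivAt.comp_hasDerivAt (l := field n Φ c) (f := fun t : ℝ => z + t • w) (0 : ℝ)
      (by rw [hz0]; exact hd) hline
  have hψ : ∀ y, HasDerivAt (deriv Φ) (deriv (deriv Φ) y) y := fun y =>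
    (h.1 y).deriv.differentiableAt.hasDerivAt
  have hq : ∀ k, HasDerivAt (fun t : ℝ => (z + t • w).1 k) (w.1 k) 0 := fun k => by
    simpa using ((hasDerivAt_id' (0 : ℝ)).mul_const (w.1 k)).const_add (z.1 k)
  have hp : ∀ k, HasDerivAt (fun t : ℝ => (z + t • w).2 k) (w.2 k) 0 := fun k => by
    simpa using ((hasDerivAt_id' (0 : ℝ)).mul_const (w.2 k)).const_add (z.2 k)
  have h2 : HasDerivAt (fun t : ℝ => field n Φ c (z + t • w)) (w.2, fun k =>
      deriv (deriv Φ) (z.1 (k - 1) - z.1 k) * (w.1 (k - 1) - w.1 k) -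
      deriv (deriv Φ) (z.1 k - z.1 (k + 1)) * (w.1 k - w.1 (k + 1)) -
      w.1 0 * (if k = 0 then 1 else 0)) 0 := by
    have e : (fun t : ℝ => field n Φ c (z + t • w)) = fun t : ℝ => ((z + t • w).2, fun k =>
        deriv Φ ((z + t • w).1 (k - 1) - (z + t • w).1 k) -
        deriv Φ ((z + t • w).1 k - (z + t • w).1 (k + 1)) +
        (c - (z + t • w).1 0) * (if k = 0 then 1 else 0)) := by
      funext t
      refine Prod.ext (field_fst _ _) (funext fun k => field_snd _ _ _)
    rw [e]
    refine HasDerivAt.prodMk (hasDerivAt_pi.2 hp) (hasDerivAt_pi.2 fun k => ?_)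
    have a1 := HasDerivAt.comp (0 : ℝ) (hψ ((z + (0:ℝ) • w).1 (k - 1) - (z + (0:ℝ) • w).1 k))
      ((hq (k - 1)).fun_sub (hq k))
    have a2 := HasDerivAt.comp (0 : ℝ) (hψ ((z + (0:ℝ) • w).1 k - (z + (0:ℝ) • w).1 (k + 1)))
      ((hq k).fun_sub (hq (k + 1)))
    have a3 := ((hq 0).const_sub c).mul_const (if k = 0 then (1 : ℝ) else 0)
    refine HasDerivAt.congr_deriv ((a1.fun_sub a2).fun_add a3) ?_
    rw [hz0]
    ring
  exact h1.unique h2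

/-- The standard symplectic form on the state space. -/
def sympl (n : ℕ) : LinearMap.BilinForm ℝ (State n) :=
  LinearMap.mk₂ ℝ (fun x y => ∑ k, (x.1 k * y.2 k - x.2 k * y.1 k))
    (fun x x' y => by
      rw [← Finset.sum_add_distrib]; exact Finset.sum_congr rfl fun k _ => by simp; ring)
    (fun a x y => by
      rw [smul_eq_mul, Finset.mul_sum]; exact Finset.sum_congr rfl fun k _ => by simp; ring)
    (fun x y y' => by
      rw [← Finset.sum_add_distrib]; exact Finset.sum_congr rfl fun k _ => by simp; ring)
    (fun a x y => by
      rw [smul_eq_mul, Finset.mul_sum]; exact Finset.sum_congr rfl fun k _ => by simp; ring)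

lemma sympl_apply (x y : State n) :
    sympl n x y = ∑ k, (x.1 k * y.2 k - x.2 k * y.1 k) := rfl

lemma sympl_nondegenerate : (sympl n).Nondegenerate := by
  have key : ∀ x : State n, (∀ y, sympl n x y = 0) → x = 0 := by
    intro x hx
    refine Prod.ext (funext fun k => ?_) (funext fun k => ?_)
    · simpa [sympl_apply, Pi.single_apply] using hx (0, Pi.single k 1)
    · simpa [sympl_apply, Pi.single_apply] using hx (Pi.single k 1, 0)
  refine ⟨key, fun y hy => key y fun x => ?_⟩
  have := hy x
  rw [sympl_apply] at this ⊢
  rw [← neg_eq_zero, ← Finset.sum_neg_distrib, ← this]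
  exact Finset.sum_congr rfl fun k _ => by ring

/-- The linearized closed-loop field is infinitesimally symplectic, because its force part is
symmetric. -/
lemma sympl_fderiv (h : Admissible Φ) (c : ℝ) (z u v : State n) :
    sympl n (fderiv ℝ (field n Φ c) z u) v + sympl n u (fderiv ℝ (field n Φ c) z v) = 0 := by
  have key : ∀ u v : State n, ∑ k, u.1 k * (fderiv ℝ (field n Φ c) z v).2 k =
      -∑ k, deriv (deriv Φ) (z.1 (k - 1) - z.1 k) * (u.1 (k - 1) - u.1 k) * (v.1 (k - 1) - v.1 k)
        - u.1 0 * v.1 0 := by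
    intro u v
    rw [fderiv_field h]
    have h1 := sum_cyclic (fun k => u.1 k)
      (fun k => deriv (deriv Φ) (z.1 (k - 1) - z.1 k) * (v.1 (k - 1) - v.1 k))
    simp only [add_sub_cancel_right] at h1
    have h2 : ∑ k, u.1 k * (v.1 0 * (if k = 0 then 1 else 0)) = u.1 0 * v.1 0 := by simp
    have h3 : ∑ k, deriv (deriv Φ) (z.1 (k - 1) - z.1 k) * (u.1 (k - 1) - u.1 k) *
        (v.1 (k - 1) - v.1 k) = ∑ k, deriv (deriv Φ) (z.1 (k - 1) - z.1 k) * (v.1 (k - 1) - v.1 k)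
        * (u.1 (k - 1) - u.1 k) := Finset.sum_congr rfl fun k _ => by ring
    rw [h3, h1, neg_neg, ← h2, ← Finset.sum_sub_distrib]
    exact Finset.sum_congr rfl fun k _ => by ring
  have hfst : ∀ u, (fderiv ℝ (field n Φ c) z u).1 = u.2 := fun u => by rw [fderiv_field h]
  have k1 := key u v
  have k2 := key v u
  have k3 : ∑ k, deriv (deriv Φ) (z.1 (k - 1) - z.1 k) * (u.1 (k - 1) - u.1 k) *
        (v.1 (k - 1) - v.1 k) = ∑ k, deriv (deriv Φ) (z.1 (k - 1) - z.1 k) * (v.1 (k - 1) - v.1 k)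
        * (u.1 (k - 1) - u.1 k) := Finset.sum_congr rfl fun k _ => by ring
  rw [sympl_apply, sympl_apply]
  simp only [hfst, Finset.sum_sub_distrib]
  rw [k1, k3]
  have k4 : ∑ k, (fderiv ℝ (field n Φ c) z u).2 k * v.1 k =
      ∑ k, v.1 k * (fderiv ℝ (field n Φ c) z u).2 k := Finset.sum_congr rfl fun k _ => mul_comm _ _
  rw [k4, k2]
  ring

/-- The linearized flow preserves the symplectic form. -/
lemma sympl_variation (h : Admissible Φ) (c : ℝ) (z : State n) (t : ℝ) (u v : State n) :
    sympl n ((isFlow h c).variation z t u) ((isFlow h c).variation z t v) = sympl n u v := by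
  set L := (isFlow (n := n) h c).variation z with hL
  let B : State n →L[ℝ] State n →L[ℝ] ℝ := LinearMap.toContinuousLinearMap
    ((LinearMap.toContinuousLinearMap (𝕜 := ℝ) (E := State n) (F' := ℝ)).toLinearMap ∘ₗ sympl n)
  have hB : ∀ x y, B x y = sympl n x y := fun x y => rfl
  have hd : ∀ t, HasDerivAt (fun t => B (L t u) (L t v)) 0 t := by
    intro t
    have a : ∀ u, HasDerivAt (fun t => L t u) (fderiv ℝ (field n Φ c) (flow n h c t z) (L t u)) t := by
      intro u
      have := ((isFlow h c).variation_deriv z t).clm_apply (hasDerivAt_const t u)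
      simpa using this
    have b := (B.hasFDerivAt.comp_hasDerivAt t (a u)).clm_apply (a v)
    refine HasDerivAt.congr_deriv b ?_
    exact sympl_fderiv h c _ _ _
  have := is_const_of_deriv_eq_zero (fun t => (hd t).differentiableAt) (fun t => (hd t).deriv) t 0
  simpa [hB, hL, (isFlow h c).variation_zero] using this

lemma variation_injective (h : Admissible Φ) (c : ℝ) (z : State n) (t : ℝ) :
    Function.Injective ((isFlow h c).variation z t) := by
  rw [injective_iff_map_eq_zero]
  intro u hu
  refine (sympl_nondegenerate (n := n)).1 u fun v => ?_
  rw [← sympl_variation h c z t u v, hu]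
  simp

/-- A linear map preserving the symplectic form has determinant `±1`. -/
lemma abs_det_variation (h : Admissible Φ) (c : ℝ) (z : State n) (t : ℝ) :
    |((isFlow h c).variation z t).det| = 1 := by
  set L := (isFlow (n := n) h c).variation z t with hL
  let b := Module.finBasis ℝ (State n)
  have hcomp : (sympl n).comp L.toLinearMap L.toLinearMap = sympl n :=
    LinearMap.ext₂ fun u v => sympl_variation h c z t u v
  have h1 := LinearMap.BilinForm.toMatrix_comp b b (B := sympl n) L.toLinearMap L.toLinearMap
  rw [hcomp] at h1
  have h2 := congrArg Matrix.det h1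
  rw [Matrix.det_mul, Matrix.det_mul, Matrix.det_transpose, LinearMap.det_toMatrix] at h2
  have h3 : (LinearMap.BilinForm.toMatrix b (sympl n)).det ≠ 0 :=
    (LinearMap.BilinForm.nondegenerate_iff_det_ne_zero b).1 sympl_nondegenerate
  have h4 : (LinearMap.det L.toLinearMap) ^ 2 = 1 := by
    apply mul_left_cancel₀ h3
    linear_combination -h2
  change |LinearMap.det L.toLinearMap| = 1
  rwa [← pow_eq_one_iff_of_nonneg (abs_nonneg _) two_ne_zero, sq_abs]

instance isAddHaarMeasure_volume_state : (volume : Measure (State n)).IsAddHaarMeasure := by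
  rw [Measure.volume_eq_prod]
  exact Measure.prod.instIsAddHaarMeasure _ _

/-- Liouville's theorem: the closed-loop flows preserve volume. -/
lemma volume_flow_image (h : Admissible Φ) (c : ℝ) {t : ℝ} (ht : 0 < t) {s : Set (State n)}
    (hs : MeasurableSet s) : volume (flow n h c t '' s) = volume s := by
  rw [← lintegral_abs_det_fderiv_eq_addHaar_image volume hs
    (fun x _ => ((isFlow h c).hasFDerivAt ht x).hasFDerivWithinAt)
    (fun x _ y _ hxy => by
      rw [← (isFlow h c).neg_left t x, hxy, (isFlow h c).neg_left])]
  simp [abs_det_variation]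

/-- Time reversal: flipping all momenta. -/
def reversal (z : State n) : State n := (z.1, -z.2)

lemma reversal_reversal (z : State n) : reversal (reversal z) = z := by simp [reversal]

/-- The time-`t` map followed by the reversal is an involution. -/
lemma flow_reversal (h : Admissible Φ) (c t : ℝ) (z : State n) :
    flow n h c t (reversal (flow n h c t z)) = reversal z := by
  have key := (isFlow h c).unique (γ := fun s => reversal (flow n h c (-s) z))
    (fun s => by
      have h1 := (isFlow h c).reverse.deriv z s
      have hA := ((ContinuousLinearMap.fst ℝ (Fin n → ℝ) (Fin n → ℝ)).prod
        (-(ContinuousLinearMap.snd ℝ (Fin n → ℝ) (Fin n → ℝ)))).hasFDerivAt.comp_hasDerivAt s h1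
      refine HasDerivAt.congr_deriv hA ?_
      refine Prod.ext ?_ (funext fun k => ?_)
      · simp [field_fst, reversal]
      · simp [field_snd, reversal])
    (by
      obtain ⟨R, hR⟩ := (isFlow (n := n) h c).bdd ‖z‖
      refine ⟨R, fun s => ?_⟩
      have := hR z le_rfl (-s)
      rw [Prod.norm_def] at this ⊢
      simpa [reversal] using this)
  have h0 := key (-t)
  simp only [neg_neg, neg_zero, (isFlow h c).zero] at h0
  rw [h0, (isFlow h c).neg_right]

end Symplectic

/-! ### Attainable tangent spaces -/

section Infinitesimal

variable {E : Type*} [NormedAddCommGroup E] [NormedSpace ℝ E] [FiniteDimensional ℝ E]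
variable {Y : E → E} {φ : ℝ → E → E}

/-- If `W` lies in the subspaces transported from `V` by the linearized flow of `Y` for all
positive times, then both `W` and the bracket `[Y, W]` lie in `V` at the starting point. -/
lemma IsFlow.lieBracket_mem (h : IsFlow Y φ) {W : E → E} (hW : Differentiable ℝ W) (z : E)
    (V : Submodule ℝ E)
    (hV : ∀ t, 0 < t → W (φ t z) ∈ V.map (h.variation z t : E →ₗ[ℝ] E)) :
    W z ∈ V ∧ VectorField.lieBracket ℝ Y W z ∈ V := by
  have hVc : IsClosed (V : Set E) := V.closed_of_finiteDimensional
  set f : ℝ → E := fun t => Ring.inverse (h.variation z t) (W (φ t z)) with hf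
  have hL0 : h.variation z 0 = ((1 : (E →L[ℝ] E)ˣ) : E →L[ℝ] E) := by
    rw [h.variation_zero]; rfl
  have hf0 : f 0 = W z := by
    simp only [hf, hL0, h.zero, Ring.inverse_unit]
    simp
  have hinv : HasDerivAt (fun t => Ring.inverse (h.variation z t)) (-(fderiv ℝ Y z)) 0 := by
    have h1 := hasFDerivAt_ringInverse (𝕜 := ℝ) (1 : (E →L[ℝ] E)ˣ)
    have h2 := h.variation_deriv z 0
    rw [← hL0] at h1
    have h3 := h1.comp_hasDerivAt (0:ℝ) h2
    refine HasDerivAt.congr_deriv h3 ?_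
    ext v
    simp [h.zero, h.variation_zero]
  have hWd : HasDerivAt (fun t => W (φ t z)) (fderiv ℝ W z (Y z)) 0 := by
    have h1 : HasFDerivAt W (fderiv ℝ W (φ 0 z)) (φ 0 z) := (hW _).hasFDerivAt
    have h2 := h1.comp_hasDerivAt (0:ℝ) (h.deriv z 0)
    rw [h.zero] at h2
    exact h2
  have hfd : HasDerivAt f (VectorField.lieBracket ℝ Y W z) 0 := by
    refine HasDerivAt.congr_deriv (hinv.clm_apply hWd) ?_
    rw [VectorField.lieBracket, hL0, h.zero, Ring.inverse_unit]
    simp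
    abel
  have hev : ∀ᶠ t in 𝓝[>] (0:ℝ), f t ∈ V := by
    have h1 : ∀ᶠ t in 𝓝 (0:ℝ), IsUnit (h.variation z t) := by
      have : ∀ᶠ L in 𝓝 (h.variation z 0), IsUnit L := by
        rw [hL0]; exact Units.nhds 1
      exact (h.variation_deriv z 0).continuousAt.eventually this
    filter_upwards [h1.filter_mono nhdsWithin_le_nhds, self_mem_nhdsWithin] with t ht ht0
    obtain ⟨v, hv, hve⟩ := hV t ht0
    have : f t = v := by
      simp only [hf]
      rw [← hve]
      have := Ring.inverse_mul_cancel _ ht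
      exact congrArg (fun L : E →L[ℝ] E => L v) this
    rw [this]; exact hv
  have hmem0 : f 0 ∈ V :=
    hVc.mem_of_tendsto (hfd.continuousAt.tendsto.mono_left nhdsWithin_le_nhds) hev
  refine ⟨hf0 ▸ hmem0, ?_⟩
  refine hVc.mem_of_tendsto hfd.tendsto_slope_zero_right ?_
  filter_upwards [hev] with t ht
  rw [zero_add]
  exact V.smul_mem _ (V.sub_mem ht hmem0)

end Infinitesimal

section Attainable

variable {n : ℕ} [NeZero n] {Φ : ℝ → ℝ}

/-- One step of motion: follow a closed-loop flow for a positive time. -/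
def Step (h : Admissible Φ) (x y : State n) : Prop :=
  ∃ c t : ℝ, 0 < t ∧ flow n h c t x = y

/-- `y` is reached from `x` by finitely many steps. -/
def Reach (h : Admissible Φ) : State n → State n → Prop := Relation.ReflTransGen (Step h)

/-- `Att h x z V`: the point `z` is reached from `x` by a finite composition of closed-loop
flows, and `V` is the range of the derivative of this composition with respect to the
switching times. -/
inductive Att (h : Admissible Φ) (x : State n) : State n → Submodule ℝ (State n) → Prop
  | base : Att h x x ⊥
  | step (c t : ℝ) (ht : 0 < t) (z : State n) (V : Submodule ℝ (State n)) :
      Att h x z V → Att h x (flow n h c t z)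
        (V.map ((isFlow h c).variation z t : State n →ₗ[ℝ] State n) ⊔
          ℝ ∙ field n Φ c (flow n h c t z))

/-- `Att` really describes differentials of families of reachable points. -/
lemma Att.exists_param {h : Admissible Φ} {x z : State n} {V : Submodule ℝ (State n)}
    (ha : Att h x z V) :
    ∃ (P : Type) (_ : NormedAddCommGroup P) (_ : NormedSpace ℝ P) (_ : CompleteSpace P)
      (G : P → State n) (G' : P →L[ℝ] State n) (s : P), G s = z ∧ HasStrictFDerivAt G G' s ∧
      LinearMap.range (G' : P →ₗ[ℝ] State n) = V ∧ ∀ᶠ s' in 𝓝 s, Reach h x (G s') := by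
  induction ha with
  | base =>
    refine ⟨ℝ, inferInstance, inferInstance, inferInstance, fun _ => x, 0, 0, rfl,
      hasStrictFDerivAt_const _ _, ?_, Eventually.of_forall fun _ => Relation.ReflTransGen.refl⟩
    simp
  | step c t ht z V _ ih =>
    obtain ⟨P, i1, i2, i3, G, G', s, hs, hG, hr, hev⟩ := ih
    subst hs
    have hF := (isFlow h c).hasStrictFDerivAt ht (G s)
    have hpair : HasStrictFDerivAt (fun w : P × ℝ => (G w.1, w.2))
        ((G'.comp (ContinuousLinearMap.fst ℝ P ℝ)).prod (ContinuousLinearMap.snd ℝ P ℝ))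
        (s, t) :=
      (HasStrictFDerivAt.comp (s, t) hG hasStrictFDerivAt_fst).prodMk hasStrictFDerivAt_snd
    refine ⟨P × ℝ, inferInstance, inferInstance, inferInstance,
      fun w => flow n h c w.2 (G w.1), _, (s, t), rfl,
      HasStrictFDerivAt.comp (s, t) hF hpair, ?_, ?_⟩
    · rw [← hr]
      ext v
      simp only [LinearMap.mem_range, Submodule.mem_sup, Submodule.mem_map,
        Submodule.mem_span_singleton]
      constructor
      · rintro ⟨⟨a, b⟩, rfl⟩
        exact ⟨_, ⟨G' a, ⟨a, rfl⟩, rfl⟩, _, ⟨b, rfl⟩, by simp⟩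
      · rintro ⟨_, ⟨_, ⟨a, rfl⟩, rfl⟩, _, ⟨b, rfl⟩, rfl⟩
        exact ⟨(a, b), by simp⟩
    · have h1 : ∀ᶠ w : P × ℝ in 𝓝 (s, t), Reach h x (G w.1) :=
        (continuous_fst.tendsto (s, t)).eventually hev
      have h2 : ∀ᶠ w : P × ℝ in 𝓝 (s, t), 0 < w.2 :=
        (continuous_snd.tendsto (s, t)).eventually (lt_mem_nhds ht)
      filter_upwards [h1, h2] with w hw1 hw2
      exact hw1.tail ⟨c, w.2, hw2, rfl⟩

/-- Full attainable tangent space: the open mapping property of submersions gives interior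
points. -/
lemma Att.interior_nonempty {h : Admissible Φ} {x z : State n} (ha : Att h x z ⊤) :
    (interior {y | Reach h x y}).Nonempty := by
  obtain ⟨P, i1, i2, i3, G, G', s, hs, hG, hr, hev⟩ := ha.exists_param
  refine ⟨G s, ?_⟩
  rw [mem_interior_iff_mem_nhds, ← hG.map_nhds_eq_of_surj hr]
  exact hev

/-- Attainable tangent spaces of dimension exactly `r`. -/
def MaxAtt (h : Admissible Φ) (x : State n) (r : ℕ) (z : State n)
    (V : Submodule ℝ (State n)) : Prop :=
  Att h x z V ∧ Module.finrank ℝ V = r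

/-- Some dimension `r` of attainable tangent spaces is maximal. -/
lemma exists_max_att (h : Admissible Φ) (x : State n) :
    ∃ r, (∃ z V, MaxAtt h x r z V) ∧ ∀ z V, Att h x z V → Module.finrank ℝ V ≤ r := by
  classical
  let S : Set ℕ := {r | ∃ z V, MaxAtt h x r z V}
  have hne : S.Nonempty := ⟨_, x, ⊥, Att.base, rfl⟩
  have hb : BddAbove S := by
    refine ⟨Module.finrank ℝ (State n), ?_⟩
    rintro r ⟨z, V, hV⟩
    rw [← hV.2]; exact Submodule.finrank_le V
  exact ⟨sSup S, Nat.sSup_mem hne hb, fun z V hV => le_csSup hb ⟨z, V, hV, rfl⟩⟩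

/-- A tangent space of maximal dimension is transported by every flow to another one, which
contains the corresponding velocity. -/
lemma MaxAtt.transport {h : Admissible Φ} {x z : State n} {r : ℕ} {V : Submodule ℝ (State n)}
    (hmax : ∀ z V, Att h x z V → Module.finrank ℝ V ≤ r) (hV : MaxAtt h x r z V)
    (c t : ℝ) (ht : 0 < t) :
    MaxAtt h x r (flow n h c t z)
        (V.map ((isFlow h c).variation z t : State n →ₗ[ℝ] State n)) ∧
      field n Φ c (flow n h c t z) ∈
        V.map ((isFlow h c).variation z t : State n →ₗ[ℝ] State n) := by
  set V₁ := V.map ((isFlow h c).variation z t : State n →ₗ[ℝ] State n) with hV₁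
  have hstep := Att.step c t ht z V hV.1
  have hdim : Module.finrank ℝ V₁ = r := by
    rw [← hV.2]
    exact (Submodule.equivMapOfInjective _ (variation_injective h c z t) V).symm.finrank_eq
  have heq : V₁ = V₁ ⊔ ℝ ∙ field n Φ c (flow n h c t z) :=
    Submodule.eq_of_le_of_finrank_le le_sup_left (by rw [hdim]; exact hmax _ _ hstep)
  refine ⟨⟨heq ▸ hstep, hdim⟩, ?_⟩
  rw [heq]
  exact Submodule.mem_sup_right (Submodule.mem_span_singleton_self _)

end Attainable

/-! ### Vector fields tangent to the attainable spaces -/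

section Analytic

lemma contDiff_omega_deriv {f : ℝ → ℝ} (hf : ContDiff ℝ ω f) : ContDiff ℝ ω (deriv f) :=
  contDiff_omega_iff_analyticOnNhd.2 fun x _ =>
    (contDiff_omega_iff_analyticOnNhd.1 hf x (mem_univ x)).deriv

lemma contDiff_omega_iteratedDeriv {f : ℝ → ℝ} (hf : ContDiff ℝ ω f) (j : ℕ) :
    ContDiff ℝ ω (iteratedDeriv j f) := by
  induction j with
  | zero => simpa using hf
  | succ j ih => rw [iteratedDeriv_succ]; exact contDiff_omega_deriv ih

lemma hasDerivAt_iteratedDeriv {f : ℝ → ℝ} (hf : ContDiff ℝ ω f) (j : ℕ) (y : ℝ) :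
    HasDerivAt (iteratedDeriv j f) (iteratedDeriv (j + 1) f y) y := by
  rw [iteratedDeriv_succ]
  exact ((contDiff_omega_iteratedDeriv hf j).differentiable (by simp) y).hasDerivAt

/-- An analytic function whose Taylor coefficients at `0` all vanish is zero. -/
lemma eq_zero_of_iteratedDeriv {g : ℝ → ℝ} (hg : ContDiff ℝ ω g)
    (h0 : ∀ j, iteratedDeriv j g 0 = 0) (s : ℝ) : g s = 0 := by
  have han : AnalyticOnNhd ℝ g univ := contDiff_omega_iff_analyticOnNhd.1 hg
  have hp := (han 0 (mem_univ _)).hasFPowerSeriesAt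
  have hz : (FormalMultilinearSeries.ofScalars ℝ
      (fun n => iteratedDeriv n g 0 / n.factorial)) = 0 := by
    ext n v
    simp [h0]
  rw [hz] at hp
  exact han.eqOn_zero_of_preconnected_of_eventuallyEq_zero isPreconnected_univ (mem_univ 0)
    hp.eventually_eq_zero (mem_univ s)

variable {E : Type*} [NormedAddCommGroup E] [NormedSpace ℝ E]

/-- If all Taylor coefficients at `0` of the analytic curve
`s ↦ α (y₀ - s) • A + β (y₁ + s) • B` lie in `V`, then so does the whole curve. -/
lemma pair_mem (V : Submodule ℝ E) {α β : ℝ → ℝ} (hα : ContDiff ℝ ω α) (hβ : ContDiff ℝ ω β)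
    (A B : E) (y₀ y₁ : ℝ)
    (hj : ∀ j, ((-1) ^ j * iteratedDeriv j α y₀) • A + iteratedDeriv j β y₁ • B ∈ V) (s : ℝ) :
    α (y₀ - s) • A + β (y₁ + s) • B ∈ V := by
  by_contra hcon
  obtain ⟨l, hl, hlV⟩ := Submodule.exists_le_ker_of_notMem hcon
  set g : ℕ → ℝ → ℝ := fun j s =>
    ((-1) ^ j * iteratedDeriv j α (y₀ - s)) * l A + iteratedDeriv j β (y₁ + s) * l B with hg
  have hd : ∀ j s, HasDerivAt (g j) (g (j + 1) s) s := by
    intro j s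
    have h1 := (hasDerivAt_iteratedDeriv hα j (y₀ - s)).comp_const_sub y₀ s
    have h2 := (hasDerivAt_iteratedDeriv hβ j (y₁ + s)).comp_const_add y₁ s
    refine HasDerivAt.congr_deriv
      (((h1.const_mul ((-1) ^ j)).mul_const (l A)).add (h2.mul_const (l B))) ?_
    simp only [hg]
    ring
  have hit : ∀ j, iteratedDeriv j (g 0) = g j := by
    intro j
    induction j with
    | zero => simp
    | succ j ih => rw [iteratedDeriv_succ, ih]; ext s; exact (hd j s).deriv
  have hsm : ContDiff ℝ ω (g 0) := by
    simp only [hg, pow_zero, one_mul, iteratedDeriv_zero]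
    fun_prop
  have hz := eq_zero_of_iteratedDeriv hsm (fun j => by
    rw [hit]
    have := hlV (hj j)
    simpa [hg] using this) s
  apply hl
  simpa [hg] using hz

/-- `α` and `β` separate: a curve `s ↦ α (y₀ - s) • A + β (y₁ + s) • B` stays in a subspace
only if `A` and `B` belong to it. -/
def Separating (E : Type*) [NormedAddCommGroup E] [NormedSpace ℝ E] (α β : ℝ → ℝ) : Prop :=
  ∀ (V : Submodule ℝ E) (A B : E) (y₀ y₁ : ℝ),
    (∀ s, α (y₀ - s) • A + β (y₁ + s) • B ∈ V) → A ∈ V ∧ B ∈ V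

/-- Genericity is exactly what is needed to separate the forces on the two neighbours. -/
lemma Generic.separating {Φ : ℝ → ℝ} (hg : Generic Φ) :
    Separating E (deriv (deriv Φ)) (deriv (deriv Φ)) := by
  intro V A B y₀ y₁ hs
  set ψ := deriv (deriv Φ) with hψ
  obtain ⟨h1, h2⟩ := hg ((y₀ + y₁) / 2)
  rw [← hψ] at h1 h2
  push Not at h1 h2
  -- symmetrize about the midpoint of `y₀` and `y₁`
  have key : ∀ t, ψ ((y₀ + y₁) / 2 - t) • A + ψ ((y₀ + y₁) / 2 + t) • B ∈ V := by
    intro t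
    have := hs (t + (y₀ - y₁) / 2)
    convert this using 4 <;> ring
  obtain ⟨t, ht⟩ := h1
  obtain ⟨t', ht'⟩ := h2
  have hsub : A - B ∈ V := by
    have h3 := V.sub_mem (key t) (key (-t))
    have h4 : (ψ ((y₀ + y₁) / 2 - t) - ψ ((y₀ + y₁) / 2 + t)) • (A - B) ∈ V := by
      convert h3 using 1
      rw [sub_neg_eq_add, ← sub_eq_add_neg]
      module
    exact (V.smul_mem_iff (sub_ne_zero.2 (Ne.symm ht))).1 h4
  have hadd : A + B ∈ V := by
    have h3 := V.add_mem (key t') (key (-t'))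
    have h4 : (ψ ((y₀ + y₁) / 2 - t') + ψ ((y₀ + y₁) / 2 + t')) • (A + B) ∈ V := by
      convert h3 using 1
      rw [sub_neg_eq_add, ← sub_eq_add_neg]
      module
    refine (V.smul_mem_iff ?_).1 h4
    intro h0
    exact ht' (by linarith)
  constructor
  · have := V.smul_mem (1 / 2 : ℝ) (V.add_mem hadd hsub)
    convert this using 1
    module
  · have := V.smul_mem (1 / 2 : ℝ) (V.sub_mem hadd hsub)
    convert this using 1
    module

end Analytic

section GoodFields


variable {E : Type*} [NormedAddCommGroup E] [NormedSpace ℝ E] [CompleteSpace E]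

/-- `X` is tangent to the family `Q` of pointed subspaces. -/
def Tangent (Q : E → Submodule ℝ E → Prop) (X : E → E) : Prop :=
  ∀ z V, Q z V → X z ∈ V

/-- Analytic vector fields tangent to the family `Q` and normalizing the Lie algebra of analytic
fields tangent to `Q`. -/
structure Good (Q : E → Submodule ℝ E → Prop) (X : E → E) : Prop where
  smooth : ContDiff ℝ ω X
  tangent : Tangent Q X
  normal : ∀ W, ContDiff ℝ ω W → Tangent Q W → Tangent Q (VectorField.lieBracket ℝ X W)

namespace Good

variable {Q : E → Submodule ℝ E → Prop} {X Y : E → E}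

lemma add (hX : Good Q X) (hY : Good Q Y) : Good Q (fun z => X z + Y z) where
  smooth := hX.smooth.add hY.smooth
  tangent z V hV := V.add_mem (hX.tangent z V hV) (hY.tangent z V hV)
  normal W hW hWt z V hV := by
    have h1 := V.add_mem (hX.normal W hW hWt z V hV) (hY.normal W hW hWt z V hV)
    have h2 := VectorField.lieBracket_add_left (W := W) (hX.smooth.differentiable (by simp) z)
      (hY.smooth.differentiable (by simp) z)
    rw [← h2] at h1
    exact h1

lemma smul (f : E → ℝ) (hf : ContDiff ℝ ω f) (e : E) (he : Good Q (fun _ => e)) :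
    Good Q (fun z => f z • e) where
  smooth := hf.smul contDiff_const
  tangent z V hV := V.smul_mem _ (he.tangent z V hV)
  normal W hW hWt z V hV := by
    have h1 := he.normal W hW hWt z V hV
    have hd : HasFDerivAt (fun z => f z • e) ((fderiv ℝ f z).smulRight e) z :=
      (hf.differentiable (by simp) z).hasFDerivAt.smul_const e
    simp only [VectorField.lieBracket, hd.fderiv] at h1 ⊢
    simp only [fderiv_fun_const, Pi.zero_apply, ContinuousLinearMap.zero_apply, sub_zero,
      map_smul, ContinuousLinearMap.smulRight_apply] at h1 ⊢
    exact V.sub_mem (V.smul_mem _ h1) (V.smul_mem _ (he.tangent z V hV))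

lemma bracket (hX : Good Q X) (hY : Good Q Y) : Good Q (VectorField.lieBracket ℝ X Y) where
  smooth := hX.smooth.lieBracket_vectorField hY.smooth (by simp)
  tangent := hX.normal Y hY.smooth hY.tangent
  normal W hW hWt z V hV := by
    have h1 := hX.normal _ (hY.smooth.lieBracket_vectorField hW (m := ω) (by simp))
      (hY.normal W hW hWt) z V hV
    have h2 := hY.normal _ (hX.smooth.lieBracket_vectorField hW (m := ω) (by simp))
      (hX.normal W hW hWt) z V hV
    have h3 := VectorField.leibniz_identity_lieBracket (𝕜 := ℝ) (n := ω) (by simp)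
      hX.smooth.contDiffAt hY.smooth.contDiffAt hW.contDiffAt (x := z)
    rw [h3] at h1
    simpa using V.sub_mem h1 h2

/-- If `z ↦ α (l z) • a + β (m z) • b` is good for separating `α`, `β`, and the constant field
`e`, along which `l` decreases and `m` increases at unit speed, is good, then the constant fields
`a` and `b` are good. -/
lemma pair {α β : ℝ → ℝ} (hα : ContDiff ℝ ω α) (hβ : ContDiff ℝ ω β)
    (hsep : Separating E α β) {a b e : E} {l m : E →L[ℝ] ℝ} (hl : l e = -1) (hm : m e = 1)
    (he : Good Q (fun _ => e)) (hZ : Good Q (fun z => α (l z) • a + β (m z) • b)) :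
    Good Q (fun _ => a) ∧ Good Q (fun _ => b) := by
  have hder : ∀ (f : ℝ → ℝ) (_ : ContDiff ℝ ω f) (k : E →L[ℝ] ℝ) (w z : E),
      HasFDerivAt (fun z => f (k z) • w) ((deriv f (k z) • k).smulRight w) z := by
    intro f hf k w z
    have h1 := ((hf.differentiable (by simp) (k z)).hasDerivAt.comp_hasFDerivAt z k.hasFDerivAt)
    exact h1.smul_const w
  have hcd : ∀ j : ℕ, ContDiff ℝ ω fun y => (-1) ^ j * iteratedDeriv j α y := fun j =>
    contDiff_const.mul (contDiff_omega_iteratedDeriv hα j)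
  have hder2 : ∀ (j : ℕ) (z : E),
      HasFDerivAt (fun z => ((-1) ^ j * iteratedDeriv j α (l z)) • a
        + iteratedDeriv j β (m z) • b)
      (((((-1) ^ j * iteratedDeriv (j + 1) α (l z)) • l).smulRight a)
        + ((iteratedDeriv (j + 1) β (m z) • m).smulRight b)) z := by
    intro j z
    have h1 := hder _ (hcd j) l a z
    have h2 := hder _ (contDiff_omega_iteratedDeriv hβ j) m b z
    rw [((hasDerivAt_iteratedDeriv hα j (l z)).const_mul ((-1) ^ j)).deriv] at h1
    rw [(hasDerivAt_iteratedDeriv hβ j (m z)).deriv] at h2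
    exact h1.add h2
  have hgood : ∀ j : ℕ, Good Q (fun z => ((-1) ^ j * iteratedDeriv j α (l z)) • a
      + iteratedDeriv j β (m z) • b) := by
    intro j
    induction j with
    | zero => simpa using hZ
    | succ j ih =>
      have h1 := he.bracket ih
      convert h1 using 1
      funext z
      rw [VectorField.lieBracket, (hder2 j z).fderiv]
      simp [hl, hm, pow_succ]
  have hmem : ∀ z V, Q z V → a ∈ V ∧ b ∈ V := fun z V hV =>
    hsep V a b (l z) (m z) (pair_mem V hα hβ a b (l z) (m z)
      fun j => (hgood j).tangent z V hV)
  have hnor : ∀ W, ContDiff ℝ ω W → Tangent Q W → ∀ z V, Q z V →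
      fderiv ℝ W z a ∈ V ∧ fderiv ℝ W z b ∈ V := by
    intro W hW hWt z V hV
    refine hsep V _ _ (l z) (m z) (pair_mem V hα hβ _ _ (l z) (m z) fun j => ?_)
    have h1 := (hgood j).normal W hW hWt z V hV
    rw [VectorField.lieBracket, (hder2 j z).fderiv] at h1
    simp only [map_add, map_smul, ContinuousLinearMap.add_apply,
      ContinuousLinearMap.smulRight_apply] at h1
    have h2 := V.add_mem h1 (V.add_mem
      (V.smul_mem ((((-1) ^ j * iteratedDeriv (j + 1) α (l z)) • l) (W z)) (hmem z V hV).1)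
      (V.smul_mem ((iteratedDeriv (j + 1) β (m z) • m) (W z)) (hmem z V hV).2))
    simpa using h2
  refine ⟨⟨contDiff_const, fun z V hV => (hmem z V hV).1, fun W hW hWt z V hV => ?_⟩,
    ⟨contDiff_const, fun z V hV => (hmem z V hV).2, fun W hW hWt z V hV => ?_⟩⟩
  · simpa [VectorField.lieBracket] using (hnor W hW hWt z V hV).1
  · simpa [VectorField.lieBracket] using (hnor W hW hWt z V hV).2

end Good

end GoodFields

/-! ### The Lie algebra rank condition -/

section Rank

variable {n : ℕ} [NeZero n] {Φ : ℝ → ℝ}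

lemma fderiv_field_ep (h : Admissible Φ) (c : ℝ) (k : Fin n) (z : State n) :
    fderiv ℝ (field n Φ c) z (ep n k) = eq' n k := by
  rw [fderiv_field h]
  ext j <;> simp [ep, eq']

lemma fderiv_field_eq (h : Admissible Φ) (c : ℝ) (k : Fin n) (z : State n) :
    fderiv ℝ (field n Φ c) z (eq' n k) =
      deriv (deriv Φ) (z.1 (k - 1) - z.1 k) • ep n (k - 1) +
      deriv (deriv Φ) (z.1 k - z.1 (k + 1)) • ep n (k + 1) +
      (-deriv (deriv Φ) (z.1 (k - 1) - z.1 k) - deriv (deriv Φ) (z.1 k - z.1 (k + 1))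
        - (Pi.single k 1 : Fin n → ℝ) 0) • ep n k := by
  rw [fderiv_field h]
  ext j
  · simp [ep, eq']
  · have e1 : (j - 1 = k) ↔ (j = k + 1) := sub_eq_iff_eq_add
    have e2 : (j + 1 = k) ↔ (j = k - 1) := eq_sub_iff_add_eq.symm
    simp only [ep, eq', Pi.single_apply, e1, e2, Prod.smul_mk, Prod.mk_add_mk, Pi.add_apply,
      Pi.smul_apply, smul_eq_mul]
    by_cases h1 : j = k + 1 <;> by_cases h2 : j = k <;> by_cases h3 : j = k - 1 <;>
      simp only [h1, h2, h3, if_true, if_false] <;> grind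

/-- The family `Q` of pointed subspaces is transported by all closed-loop flows, and the transported
subspaces contain the velocities. -/
def Invariant (h : Admissible Φ) (Q : State n → Submodule ℝ (State n) → Prop) : Prop :=
  ∀ z V, Q z V → ∀ c t : ℝ, 0 < t →
    Q (flow n h c t z) (V.map ((isFlow h c).variation z t : State n →ₗ[ℝ] State n)) ∧
      field n Φ c (flow n h c t z) ∈
        V.map ((isFlow h c).variation z t : State n →ₗ[ℝ] State n)

variable {h : Admissible Φ} {Q : State n → Submodule ℝ (State n) → Prop}

lemma good_field (hQ : Invariant h Q) (c : ℝ) : Good Q (field n Φ c) where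
  smooth := contDiff_field h c
  tangent z V hV := ((isFlow h c).lieBracket_mem ((contDiff_field h c).differentiable (by simp))
    z V fun t ht => (hQ z V hV c t ht).2).1
  normal W hW hWt z V hV := ((isFlow h c).lieBracket_mem (hW.differentiable (by simp))
    z V fun t ht => hWt _ _ (hQ z V hV c t ht).1).2

lemma good_ep_zero (hQ : Invariant h Q) : Good Q (fun _ => ep n 0) := by
  have h1 := good_field hQ 1
  have h0 := good_field hQ 0
  have key : ∀ z : State n, ep n 0 = field n Φ 1 z - field n Φ 0 z := by
    intro z
    simp only [field]
    module
  refine ⟨contDiff_const, fun z V hV => ?_, fun W hW hWt z V hV => ?_⟩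
  · rw [key z]
    exact V.sub_mem (h1.tangent z V hV) (h0.tangent z V hV)
  · have h2 := V.sub_mem (h1.normal W hW hWt z V hV) (h0.normal W hW hWt z V hV)
    have h3 : fderiv ℝ (field n Φ 1) z = fderiv ℝ (field n Φ 0) z := by
      refine ContinuousLinearMap.ext fun w => ?_
      rw [fderiv_field h, fderiv_field h]
    simp only [VectorField.lieBracket, h3, sub_sub_sub_cancel_right, ← map_sub, ← key] at h2
    simpa [VectorField.lieBracket] using h2

lemma good_eq (hQ : Invariant h Q) {k : Fin n} (hk : Good Q (fun _ => ep n k)) :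
    Good Q (fun _ => eq' n k) := by
  have h1 := hk.bracket (good_field hQ 0)
  convert h1 using 1
  funext z
  simp [VectorField.lieBracket, fderiv_field_ep h]

/-- Coordinate functional `z ↦ q_i - q_j`. -/
def gap (i j : Fin n) : State n →L[ℝ] ℝ :=
  (ContinuousLinearMap.proj (R := ℝ) (φ := fun _ : Fin n => ℝ) i -
    ContinuousLinearMap.proj (R := ℝ) (φ := fun _ : Fin n => ℝ) j).comp
      (ContinuousLinearMap.fst ℝ _ _)

lemma gap_apply (i j : Fin n) (z : State n) : gap i j z = z.1 i - z.1 j := rfl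

/-- Up to a multiple of `∂/∂p_k`, the bracket of `∂/∂q_k` with the field is the linearized pair of
forces felt by the two neighbours of particle `k`. -/
lemma good_pair (hQ : Invariant h Q) {k : Fin n} (hk : Good Q (fun _ => ep n k)) :
    Good Q (fun z => deriv (deriv Φ) (gap (k - 1) k z) • ep n (k - 1) +
      deriv (deriv Φ) (gap k (k + 1) z) • ep n (k + 1)) := by
  have h1 := (good_eq hQ hk).bracket (good_field hQ 0)
  have hψ := h.contDiff_deriv2
  have h2 := hk.smul (fun z => deriv (deriv Φ) (gap (k - 1) k z)
    + deriv (deriv Φ) (gap k (k + 1) z) + (Pi.single k 1 : Fin n → ℝ) 0)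
    (by fun_prop) (ep n k)
  have h3 := h1.add h2
  convert h3 using 1
  funext z
  simp only [VectorField.lieBracket, fderiv_field_eq h, gap_apply]
  simp only [fderiv_fun_const, Pi.zero_apply, zero_apply, sub_zero]
  module

/-- The momentum directions are obtained one after the other around the ring. -/
lemma good_ep_succ (hg : Generic Φ) (hn : 3 ≤ n) (hQ : Invariant h Q) {k : Fin n}
    (hk : Good Q (fun _ => ep n k)) : Good Q (fun _ => ep n (k + 1)) := by
  have hone : (1 : Fin n) ≠ 0 := by
    intro h0
    have := congrArg Fin.val h0
    rw [Fin.val_one', Nat.mod_eq_of_lt (by omega)] at this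
    simp at this
  refine (Good.pair h.contDiff_deriv2 h.contDiff_deriv2 hg.separating ?_ ?_ (good_eq hQ hk)
    (good_pair hQ hk)).2
  · simp [gap_apply, eq', hone]
  · simp [gap_apply, eq', hone]

open scoped Fin.CommRing in
lemma good_ep (hg : Generic Φ) (hn : 3 ≤ n) (hQ : Invariant h Q) (k : Fin n) :
    Good Q (fun _ => ep n k) := by
  have key : ∀ j : ℕ, Good Q (fun _ => ep n (j : Fin n)) := by
    intro j
    induction j with
    | zero => simpa using good_ep_zero hQ
    | succ j ih => simpa using good_ep_succ hg hn hQ ih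
  simpa using key k.val

/-- Since all coordinate fields are tangent, every member of an invariant family is the whole
space. -/
lemma Invariant.eq_top (hg : Generic Φ) (hn : 3 ≤ n) (hQ : Invariant h Q) {z : State n}
    {V : Submodule ℝ (State n)} (hV : Q z V) : V = ⊤ := by
  rw [eq_top_iff]
  intro w _
  have hw : w = ∑ k, w.1 k • eq' n k + ∑ k, w.2 k • ep n k := by
    ext j <;> simp [ep, eq', Prod.fst_sum, Prod.snd_sum, Finset.sum_apply, Pi.single_apply]
  rw [hw]
  exact V.add_mem
    (V.sum_mem fun k _ => V.smul_mem _ ((good_eq hQ (good_ep hg hn hQ k)).tangent z V hV))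
    (V.sum_mem fun k _ => V.smul_mem _ ((good_ep hg hn hQ k).tangent z V hV))

/-- The set of points reached from any given point has nonempty interior. -/
lemma interior_reach_nonempty (hg : Generic Φ) (hn : 3 ≤ n) (h : Admissible Φ) (x : State n) :
    (interior {y | Reach h x y}).Nonempty := by
  obtain ⟨r, ⟨z, V, hV⟩, hmax⟩ := exists_max_att h x
  have hQ : Invariant h (MaxAtt h x r) := fun z V hV c t ht => hV.transport hmax c t ht
  have htop := hQ.eq_top hg hn hV
  subst htop
  exact hV.1.interior_nonempty

end Rank

/-! ### Density of the reachable sets -/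

section Density

variable {n : ℕ} [NeZero n] {Φ : ℝ → ℝ}

/-- Poincaré-type recurrence: a closed forward invariant set of a closed-loop flow pulls back its
interior into itself, because the flow preserves volume and the energy sublevel sets are
bounded. -/
lemma flow_neg_mem (h : Admissible Φ) {C : Set (State n)} (hC : IsClosed C) {c t : ℝ}
    (ht : 0 < t) (hinv : ∀ z ∈ C, flow n h c t z ∈ C) {u : State n} (hu : u ∈ interior C) :
    flow n h c (-t) u ∈ C := by
  by_contra hcon
  have hF := isFlow (n := n) h c
  have hE := continuous_energy (n := n) h c
  set e := energy n Φ c u + 1 with he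
  set O : Set (State n) := interior C ∩ (flow n h c (-t) ⁻¹' Cᶜ ∩ {z | energy n Φ c z < e})
    with hO
  set K : Set (State n) := C ∩ {z | energy n Φ c z ≤ e} with hK
  have hOo : IsOpen O := isOpen_interior.inter
    ((hC.isOpen_compl.preimage (hF.continuous (-t))).inter (isOpen_lt hE continuous_const))
  have hOpos : 0 < volume O :=
    hOo.measure_pos volume ⟨u, hu, hcon, by simp [he]⟩
  have hKc : IsClosed K := hC.inter (isClosed_le hE continuous_const)
  have hKfin : volume K < ⊤ := by
    obtain ⟨R, hR⟩ := energy_coercive (n := n) h c e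
    refine lt_of_le_of_lt (measure_mono (t := Metric.closedBall 0 R) ?_)
      (isCompact_closedBall _ _).measure_lt_top
    intro z hz
    simpa using hR z hz.2
  have hsub : flow n h c t '' K ⊆ K := by
    rintro _ ⟨z, hz, rfl⟩
    exact ⟨hinv z hz.1, by simpa [energy_flow h c] using hz.2⟩
  have hOK : O ⊆ K := fun z hz => 
    ⟨interior_subset hz.1, show energy n Φ c z ≤ e from le_of_lt hz.2.2⟩
  have hdisj : Disjoint (flow n h c t '' K) O := by
    rw [Set.disjoint_left]
    rintro _ ⟨z, hz, rfl⟩ hz'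
    apply hz'.2.1
    rw [hF.neg_left]
    exact hz.1
  have h1 : volume (flow n h c t '' K) + volume O ≤ volume K := by
    rw [← measure_union hdisj hOo.measurableSet]
    exact measure_mono (union_subset hsub hOK)
  rw [volume_flow_image h c ht hKc.measurableSet] at h1
  have h2 : volume K + 0 < volume K + volume O :=
    ENNReal.add_lt_add_left hKfin.ne hOpos
  rw [add_zero] at h2
  exact absurd h1 (not_le.2 h2)

/-- Reachable sets are dense. -/
lemma dense_reach (hg : Generic Φ) (hn : 3 ≤ n) (h : Admissible Φ) (x : State n) :
    Dense {y | Reach h x y} := by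
  set A : Set (State n) := {y | Reach h x y} with hA
  set C := closure A with hC
  set U := interior C with hU
  have hAinv : ∀ c t : ℝ, 0 < t → ∀ z ∈ A, flow n h c t z ∈ A := fun c t ht z hz =>
    Relation.ReflTransGen.tail hz ⟨c, t, ht, rfl⟩
  have hCinv : ∀ c t : ℝ, 0 < t → ∀ z ∈ C, flow n h c t z ∈ C := fun c t ht z hz =>
    map_mem_closure ((isFlow h c).continuous t) hz (hAinv c t ht)
  have hUneg : ∀ c t : ℝ, 0 < t → ∀ z ∈ U, flow n h c (-t) z ∈ U := by
    intro c t ht z hz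
    refine mem_interior.2 ⟨flow n h c t ⁻¹' U, ?_,
      isOpen_interior.preimage ((isFlow h c).continuous t), ?_⟩
    · intro w hw
      have := flow_neg_mem h isClosed_closure ht (hCinv c t ht) hw
      rwa [(isFlow h c).neg_left] at this
    · change flow n h c t (flow n h c (-t) z) ∈ U
      rwa [(isFlow h c).neg_right]
  have hUpos : ∀ c t : ℝ, 0 < t → ∀ z ∈ U, flow n h c t z ∈ U := by
    intro c t ht z hz
    refine mem_interior.2 ⟨flow n h c (-t) ⁻¹' U, ?_,
      isOpen_interior.preimage ((isFlow h c).continuous (-t)), ?_⟩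
    · intro w hw
      have := hCinv c t ht _ (interior_subset hw)
      rwa [(isFlow h c).neg_right] at this
    · change flow n h c (-t) (flow n h c t z) ∈ U
      rwa [(isFlow h c).neg_left]
  have hUo : IsOpen U := isOpen_interior
  have hfr : ∀ y ∈ frontier U, ∀ z, Reach h y z → z ∈ frontier U := by
    intro y hy z hz
    induction hz with
    | refl => exact hy
    | tail _ hstep ih =>
      obtain ⟨c, t, ht, rfl⟩ := hstep
      rw [hUo.frontier_eq] at ih ⊢
      refine ⟨map_mem_closure ((isFlow h c).continuous t) ih.1 (hUpos c t ht), fun hmem => ?_⟩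
      have := hUneg c t ht _ hmem
      rw [(isFlow h c).neg_left] at this
      exact ih.2 this
  have hfe : frontier U = ∅ := by
    rw [Set.eq_empty_iff_forall_notMem]
    intro y hy
    obtain ⟨w, hw⟩ := interior_reach_nonempty hg hn h y
    have h1 : w ∈ interior (frontier U) := interior_mono (fun z hz => hfr y hy z hz) hw
    rw [← frontier_compl, interior_frontier hUo.isClosed_compl] at h1
    exact h1
  have hUne : U.Nonempty :=
    (interior_reach_nonempty hg hn h x).mono (interior_mono subset_closure)
  have hUuniv : U = univ := (isClopen_iff_frontier_eq_empty.2 hfe).eq_univ hUne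
  intro z
  have : z ∈ U := hUuniv ▸ mem_univ z
  exact interior_subset this

end Density

/-! ### From closed-loop flows to admissible trajectories -/

section Trajectories

variable {n : ℕ} [NeZero n] {Φ : ℝ → ℝ}

/-- `y` is joined to `x` by an admissible trajectory over a time interval of positive length,
with everywhere bounded control. -/
def TrajJoined (n : ℕ) [NeZero n] (Φ : ℝ → ℝ) (x y : State n) : Prop :=
  ∃ (θ : ℝ) (u : ℝ → ℝ) (X : ℝ → State n), 0 < θ ∧ Measurable u ∧ (∃ C : ℝ, ∀ t, |u t| ≤ C) ∧
    Continuous X ∧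
    (∀ t ∈ Icc 0 θ, X t = X 0 + ∫ s in (0:ℝ)..t, (drift n Φ (X s) + u s • ep n 0)) ∧
    X 0 = x ∧ X θ = y

lemma continuous_drift (h : Admissible Φ) : Continuous (drift n Φ) := by
  have h1 := h.contDiff_deriv.continuous
  unfold drift
  fun_prop

lemma intervalIntegrable_rhs (h : Admissible Φ) {u : ℝ → ℝ} (hu : Measurable u)
    (hb : ∃ C : ℝ, ∀ t, |u t| ≤ C) {X : ℝ → State n} (hX : Continuous X) (a b : ℝ) :
    IntervalIntegrable (fun s => drift n Φ (X s) + u s • ep n 0) volume a b := by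
  obtain ⟨C, hC⟩ := hb
  have h1 : IntervalIntegrable (fun s => drift n Φ (X s)) volume a b :=
    ((continuous_drift h).comp hX).intervalIntegrable a b
  have h2 : IntervalIntegrable (fun s => u s • ep n 0) volume a b := by
    refine (intervalIntegrable_const (c := C * ‖ep n 0‖)).mono_fun'
      ((hu.smul_const (ep n 0)).aestronglyMeasurable) (Eventually.of_forall fun s => ?_)
    change ‖u s • ep n 0‖ ≤ _
    rw [norm_smul, Real.norm_eq_abs]
    exact mul_le_mul_of_nonneg_right (hC s) (norm_nonneg _)
  exact h1.add h2

lemma Step.joined {h : Admissible Φ} {x y : State n} (hs : Step h x y) : TrajJoined n Φ x y := by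
  obtain ⟨c, t, ht, rfl⟩ := hs
  have hF := isFlow (n := n) h c
  have hcont : Continuous fun s => flow n h c s x :=
    continuous_iff_continuousAt.2 fun s => (hF.deriv x s).continuousAt
  obtain ⟨R, hR⟩ := hF.bdd ‖x‖
  have hu : Continuous fun s => c - (flow n h c s x).1 0 := by fun_prop
  refine ⟨t, fun s => c - (flow n h c s x).1 0, fun s => flow n h c s x, ht, hu.measurable,
    ⟨|c| + R, fun s => ?_⟩, hcont, fun s _ => ?_, hF.zero x, rfl⟩
  · refine (abs_sub _ _).trans (add_le_add le_rfl ?_)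
    exact ((norm_le_pi_norm (flow n h c s x).1 0).trans (norm_fst_le _)).trans (hR x le_rfl s)
  · have hi : Continuous fun s => field n Φ c (flow n h c s x) :=
      (contDiff_field h c).continuous.comp hcont
    have := intervalIntegral.integral_eq_sub_of_hasDerivAt (a := 0) (b := s)
      (fun τ _ => hF.deriv x τ) (hi.intervalIntegrable _ _)
    simp only [field] at this
    rw [this]
    abel

/-- Concatenation of admissible trajectories. -/
lemma TrajJoined.trans (h : Admissible Φ) {x y z : State n} (h1 : TrajJoined n Φ x y)
    (h2 : TrajJoined n Φ y z) : TrajJoined n Φ x z := by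
  obtain ⟨θ₁, u₁, X₁, hθ₁, hu₁, ⟨C₁, hC₁⟩, hX₁, he₁, hx₁, hy₁⟩ := h1
  obtain ⟨θ₂, u₂, X₂, hθ₂, hu₂, ⟨C₂, hC₂⟩, hX₂, he₂, hx₂, hy₂⟩ := h2
  set u : ℝ → ℝ := fun t => if t ≤ θ₁ then u₁ t else u₂ (t - θ₁) with hu
  set X : ℝ → State n := fun t => if t ≤ θ₁ then X₁ t else X₂ (t - θ₁) with hX
  have hum : Measurable u :=
    Measurable.ite measurableSet_Iic hu₁ (hu₂.comp (measurable_id.sub_const θ₁))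
  have hub : ∀ t, |u t| ≤ max C₁ C₂ := by
    intro t
    by_cases ht : t ≤ θ₁
    · simp only [hu, ht, if_true]; exact (hC₁ t).trans (le_max_left _ _)
    · simp only [hu, ht, if_false]; exact (hC₂ _).trans (le_max_right _ _)
  have hXc : Continuous X := by
    refine Continuous.if_le hX₁ (hX₂.comp (continuous_id.sub continuous_const)) continuous_id
      continuous_const ?_
    rintro t rfl
    simp [hx₂, hy₁]
  have hX0 : X 0 = X₁ 0 := by simp [hX, hθ₁.le]
  have hInt := intervalIntegrable_rhs h hum ⟨_, hub⟩ hXc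
  have hfirst : ∀ t ∈ Icc 0 θ₁, X₁ t = X 0 + ∫ s in (0:ℝ)..t, (drift n Φ (X s) + u s • ep n 0) := by
    intro t ht
    rw [hX0, he₁ t ht]
    congr 1
    refine intervalIntegral.integral_congr fun s hs => ?_
    rw [uIcc_of_le ht.1] at hs
    have : s ≤ θ₁ := hs.2.trans ht.2
    simp [hX, hu, this]
  refine ⟨θ₁ + θ₂, u, X, by positivity, hum, ⟨_, hub⟩, hXc, fun t ht => ?_, hX0.trans hx₁, ?_⟩
  · by_cases htθ : t ≤ θ₁
    · rw [← hfirst t ⟨ht.1, htθ⟩]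
      simp [hX, htθ]
    · have hXt : X t = X₂ (t - θ₁) := by simp [hX, htθ]
      push Not at htθ
      rw [hXt, he₂ _ ⟨by linarith, by linarith [ht.2]⟩,
        ← intervalIntegral.integral_add_adjacent_intervals (hInt 0 θ₁) (hInt θ₁ t), ← add_assoc,
        ← hfirst θ₁ ⟨hθ₁.le, le_rfl⟩, hx₂, hy₁]
      congr 1
      have hs := intervalIntegral.integral_comp_sub_right (a := θ₁) (b := t)
        (fun s => drift n Φ (X₂ s) + u₂ s • ep n 0) θ₁
      rw [sub_self] at hs
      rw [← hs]
      refine intervalIntegral.integral_congr_ae (Eventually.of_forall fun s hs => ?_)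
      rw [uIoc_of_le htθ.le] at hs
      have : ¬ s ≤ θ₁ := not_le.2 hs.1
      simp [hX, hu, this]
  · have : ¬ θ₁ + θ₂ ≤ θ₁ := by linarith
    simp [hX, this, hy₂]

lemma TrajJoined.reach {h : Admissible Φ} {x y z : State n} (hxy : TrajJoined n Φ x y)
    (hyz : Reach h y z) : TrajJoined n Φ x z := by
  induction hyz with
  | refl => exact hxy
  | tail _ hs ih => exact ih.trans h hs.joined

/-- Reachability is symmetric up to time reversal. -/
lemma Reach.reversal {h : Admissible Φ} {x y : State n} (hxy : Reach h x y) :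
    Reach h (reversal y) (reversal x) := by
  induction hxy with
  | refl => exact Relation.ReflTransGen.refl
  | tail _ hs ih =>
    obtain ⟨c, t, ht, rfl⟩ := hs
    exact Relation.ReflTransGen.head ⟨c, t, ht, flow_reversal h c t _⟩ ih

/-- Every pair of points is joined: go forward from `x` to a dense set, and backward from `y`, via
the time reversal, to a set with interior. -/
lemma joined_all (hg : Generic Φ) (hn : 3 ≤ n) (h : Admissible Φ) (x y : State n) :
    TrajJoined n Φ x y := by
  -- one initial step makes the time interval nondegenerate
  have h0 : TrajJoined n Φ x (flow n h 0 1 x) := Step.joined (h := h) ⟨0, 1, one_pos, rfl⟩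
  have hrev : Continuous (reversal : State n → State n) := by
    unfold _root_.reversal
    fun_prop
  have hopen : IsOpen (reversal ⁻¹' interior {w : State n | Reach h (reversal y) w}) :=
    isOpen_interior.preimage hrev
  obtain ⟨w, hw⟩ := interior_reach_nonempty hg hn h (reversal y)
  obtain ⟨v, hv, hv'⟩ := (dense_reach hg hn h (flow n h 0 1 x)).inter_open_nonempty _ hopen
    ⟨reversal w, by rw [mem_preimage, reversal_reversal]; exact hw⟩
  have h1 : Reach h (reversal y) (reversal v) := interior_subset (mem_preimage.1 hv)
  have h2 := h1.reversal
  rw [reversal_reversal, reversal_reversal] at h2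
  exact (h0.reach hv').reach h2

end Trajectories

/-- Global controllability of the single forced periodic multiparticle system. -/
theorem single_force_global_controllability
    (n : ℕ) [NeZero n] (hn : 3 ≤ n) (Φ : ℝ → ℝ)
    (hadm : Admissible Φ) (hgen : Generic Φ)
    (xtil xhat : State n) :
    ∃ (θ : ℝ) (u : ℝ → ℝ) (x : ℝ → State n),
      0 < θ ∧ Measurable u ∧
      (∃ C : ℝ, ∀ᵐ t : ℝ ∂volume, t ∈ Set.Icc (0:ℝ) θ → |u t| ≤ C) ∧
      IsTrajectory n Φ θ u x ∧ x 0 = xtil ∧ x θ = xhat := by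
  obtain ⟨θ, u, X, hθ, hu, ⟨C, hC⟩, hX, he, h0, h1⟩ := joined_all hgen hn hadm xtil xhat
  exact ⟨θ, u, X, hθ, hu, ⟨C, Eventually.of_forall fun t _ => hC t⟩, ⟨hX.continuousOn, he⟩,
    h0, h1⟩
end
end

section
/- Iterated Lie bracket formulas for the single forced periodic multiparticle system: Assume Φ is three times continuously differentiable. Then, with e_{q_k} and e_{p_k} denoting the constant coordinate vector fields ∂/∂q_k and ∂/∂p_k: (i) ad f g = [f,g] = −e_{q₁}; (ii) ad²f g = [f,[f,g]] equals the vector field x ↦ φ′(q₁−q₂)(e_{p₂} − e_{p₁}) + φ′(qₙ−q₁)(e_{pₙ} − e_{p₁}); (iii) [ad²f g, ad f g] equals the vector field x ↦ φ″(q₁−q₂)(e_{p₂} − e_{p₁}) − φ″(qₙ−q₁)(e_{pₙ} − e_{p₁}). -/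
/-!
Since `g` and `[f,g]` are constant vector fields, each bracket in the statement is, up to sign,
a directional derivative: `[f,g] = -Df·e_{p₁} = -e_{q₁}`, then `ad²f g = Df·e_{q₁}`, and finally
`[ad²f g, ad f g] = D(ad²f g)·e_{q₁}`. The forces enter only through terms `φ(q_i - q_j)`, whose
derivative along `v` is `φ'(q_i - q_j)(v_{q_i} - v_{q_j})` (`hasFDerivAt_comp_posDiff`). Along `e_{q₁}`
only the two springs attached to the first particle contribute, which gives the stated formulas.
-/

open scoped BigOperators
open MeasureTheory Filter Set

noncomputable section

/-- The functional `(q,p) ↦ q_i - q_j`. -/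
def posDiff (n : ℕ) (i j : Fin n) : State n →L[ℝ] ℝ :=
  ((ContinuousLinearMap.proj i : (Fin n → ℝ) →L[ℝ] ℝ) - ContinuousLinearMap.proj j).comp
    (ContinuousLinearMap.fst ℝ (Fin n → ℝ) (Fin n → ℝ))

lemma posDiff_apply (n : ℕ) (i j : Fin n) (v : State n) :
    posDiff n i j v = v.1 i - v.1 j := rfl

lemma hasFDerivAt_comp_posDiff {n : ℕ} {φ : ℝ → ℝ} (hφ : Differentiable ℝ φ) (i j : Fin n)
    (x : State n) :
    HasFDerivAt (fun y : State n => φ (y.1 i - y.1 j))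
      (deriv φ (x.1 i - x.1 j) • posDiff n i j) x :=
  (hφ _).hasDerivAt.comp_hasFDerivAt x (posDiff n i j).hasFDerivAt

lemma fderiv_drift_apply {n : ℕ} [NeZero n] {Φ : ℝ → ℝ} (hφ : Differentiable ℝ (deriv Φ))
    (x v : State n) :
    fderiv ℝ (drift n Φ) x v = (v.2, fun k =>
      deriv (deriv Φ) (x.1 (k - 1) - x.1 k) * (v.1 (k - 1) - v.1 k) -
        deriv (deriv Φ) (x.1 k - x.1 (k + 1)) * (v.1 k - v.1 (k + 1))) := by
  have hp : HasFDerivAt (fun (y : State n) (k : Fin n) =>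
      deriv Φ (y.1 (k - 1) - y.1 k) - deriv Φ (y.1 k - y.1 (k + 1)))
      (ContinuousLinearMap.pi fun k =>
        deriv (deriv Φ) (x.1 (k - 1) - x.1 k) • posDiff n (k - 1) k -
          deriv (deriv Φ) (x.1 k - x.1 (k + 1)) • posDiff n k (k + 1)) x :=
    hasFDerivAt_pi.2 fun k =>
      (hasFDerivAt_comp_posDiff hφ (k - 1) k x).sub (hasFDerivAt_comp_posDiff hφ k (k + 1) x)
  have h : HasFDerivAt (drift n Φ) _ x := (hasFDerivAt_snd (𝕜 := ℝ) (p := x)).prodMk hp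
  rw [h.fderiv]
  rfl

/-- `Df·e_{q₁}`: only the two springs attached to the first particle contribute. -/
lemma fderiv_drift_eq' {n : ℕ} [NeZero n] {Φ : ℝ → ℝ} (hφ : Differentiable ℝ (deriv Φ))
    (x : State n) :
    fderiv ℝ (drift n Φ) x (eq' n 0) =
      deriv (deriv Φ) (x.1 0 - x.1 1) • (ep n 1 - ep n 0) +
        deriv (deriv Φ) (x.1 (-1) - x.1 0) • (ep n (-1) - ep n 0) := by
  rw [fderiv_drift_apply hφ]
  refine Prod.ext (by simp [eq', ep]) (funext fun k => ?_)
  simp only [eq', ep, Prod.snd_add, Prod.smul_snd, Prod.snd_sub, Pi.add_apply, Pi.smul_apply,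
    Pi.sub_apply, Pi.single_apply, smul_eq_mul, sub_eq_zero, add_eq_zero_iff_eq_neg]
  -- Each Kronecker delta pins `k`, hence the argument of the `Φ''` that it multiplies.
  have h₁ : deriv (deriv Φ) (x.1 (k - 1) - x.1 k) * (if k = 1 then 1 else 0) =
      deriv (deriv Φ) (x.1 0 - x.1 1) * (if k = 1 then 1 else 0) := by
    split_ifs with h <;> simp [h]
  have h₂ : deriv (deriv Φ) (x.1 k - x.1 (k + 1)) * (if k = -1 then 1 else 0) =
      deriv (deriv Φ) (x.1 (-1) - x.1 0) * (if k = -1 then 1 else 0) := by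
    split_ifs with h <;> simp [h]
  have h₃ : deriv (deriv Φ) (x.1 (k - 1) - x.1 k) * (if k = 0 then 1 else 0) =
      deriv (deriv Φ) (x.1 (-1) - x.1 0) * (if k = 0 then 1 else 0) := by
    split_ifs with h <;> simp [h]
  have h₄ : deriv (deriv Φ) (x.1 k - x.1 (k + 1)) * (if k = 0 then 1 else 0) =
      deriv (deriv Φ) (x.1 0 - x.1 1) * (if k = 0 then 1 else 0) := by
    split_ifs with h <;> simp [h]
  linear_combination h₁ + h₂ - h₃ - h₄

/-- Iterated Lie bracket formulas for the single forced periodic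
multiparticle system (with `f = drift`, `g = ∂/∂p₁`, `φ = Φ'`). -/
theorem iterated_brackets (n : ℕ) [NeZero n] (hn : 3 ≤ n) (Φ : ℝ → ℝ)
    (hΦ : ContDiff ℝ 3 Φ) :
    (∀ x : State n, lieBracket (drift n Φ) (fun _ => ep n 0) x = - eq' n 0) ∧
    (∀ x : State n,
      lieBracket (drift n Φ) (lieBracket (drift n Φ) (fun _ => ep n 0)) x =
        deriv (deriv Φ) (x.1 0 - x.1 1) • (ep n 1 - ep n 0) +
        deriv (deriv Φ) (x.1 (-1) - x.1 0) • (ep n (-1) - ep n 0)) ∧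
    (∀ x : State n,
      lieBracket (lieBracket (drift n Φ) (lieBracket (drift n Φ) (fun _ => ep n 0)))
        (lieBracket (drift n Φ) (fun _ => ep n 0)) x =
        deriv (deriv (deriv Φ)) (x.1 0 - x.1 1) • (ep n 1 - ep n 0) -
        deriv (deriv (deriv Φ)) (x.1 (-1) - x.1 0) • (ep n (-1) - ep n 0)) := by
  have hφ : ContDiff ℝ 2 (deriv Φ) := ContDiff.deriv' (n := 2) hΦ
  have hφd : Differentiable ℝ (deriv Φ) := hφ.differentiable (by norm_num)
  have hψd : Differentiable ℝ (deriv (deriv Φ)) :=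
    (ContDiff.deriv' (n := 1) hφ).differentiable (by norm_num)
  have e₁ : lieBracket (drift n Φ) (fun _ => ep n 0) = fun _ => -eq' n 0 := by
    funext x
    simp only [lieBracket, fderiv_fun_const, fderiv_drift_apply hφd]
    refine Prod.ext ?_ (funext fun k => ?_) <;> simp [ep, eq']
  have e₂ : lieBracket (drift n Φ) (fun _ => -eq' n 0) = fun x =>
      deriv (deriv Φ) (x.1 0 - x.1 1) • (ep n 1 - ep n 0) +
        deriv (deriv Φ) (x.1 (-1) - x.1 0) • (ep n (-1) - ep n 0) := by
    funext x
    rw [← fderiv_drift_eq' hφd]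
    simp [lieBracket]
  refine ⟨fun x => by rw [e₁], fun x => by rw [e₁, e₂], fun x => ?_⟩
  -- Both neighbours differ from the first particle, so `q₂` and `qₙ` are constant along `e_{q₁}`.
  have h10 : (1 : Fin n) ≠ 0 := by
    obtain ⟨m, rfl⟩ : ∃ m, n = m + 2 := ⟨n - 2, by omega⟩
    simp
  have hm10 : (-1 : Fin n) ≠ 0 := neg_ne_zero.2 h10
  have h := ((hasFDerivAt_comp_posDiff hψd 0 1 x).smul_const (ep n 1 - ep n 0)).fun_add
    ((hasFDerivAt_comp_posDiff hψd (-1) 0 x).smul_const (ep n (-1) - ep n 0))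
  rw [e₁, e₂]
  simp only [lieBracket, h.fderiv]
  simp [posDiff_apply, eq', h10, hm10, sub_eq_add_neg]
  abel
end
end
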